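/- arXiv:1412.1748 — 4 statements merged into one kernel-verified Lean document; each statement's English description precedes it below -/
import Mathlib

section
/- For a set Γ, the Banach space ℓ₁(Γ) endowed with its weak topology σ(E,E′) is an ℵ-space if and only if the cardinality of Γ does not exceed the continuum 2^{ℵ₀}. -/
open TopologicalSpace Filter Set

/-- A family `N` of subsets of a topological space `X` is a *k-network* if whenever `K ⊆ U`
with `K` compact and `U` open, there is a finite subfamily `F ⊆ N` with `K ⊆ ⋃₀ F ⊆ U`. -/
def IsKNetwork {X : Type*} [TopologicalSpace X] (N : Set (Set X)) : Prop :=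
  ∀ K U : Set X, IsCompact K → IsOpen U → K ⊆ U →
    ∃ F : Set (Set X), F ⊆ N ∧ F.Finite ∧ K ⊆ ⋃₀ F ∧ ⋃₀ F ⊆ U

/-- A family `N` of subsets of `X` is a *network* if for every `x` and every open `U ∋ x`
there is `A ∈ N` with `x ∈ A ⊆ U`. -/
def IsNetwork {X : Type*} [TopologicalSpace X] (N : Set (Set X)) : Prop :=
  ∀ (x : X) (U : Set X), IsOpen U → x ∈ U → ∃ A ∈ N, x ∈ A ∧ A ⊆ U

/-- A family of subsets is *locally finite* if every point has a neighbourhood meeting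
only finitely many of its members. -/
def IsLocallyFiniteFamily {X : Type*} [TopologicalSpace X] (N : Set (Set X)) : Prop :=
  ∀ x : X, ∃ V ∈ nhds x, {A ∈ N | (A ∩ V).Nonempty}.Finite

/-- A family of subsets is *σ-locally finite* if it is a countable union of locally finite
families. -/
def IsSigmaLocallyFinite {X : Type*} [TopologicalSpace X] (N : Set (Set X)) : Prop :=
  ∃ f : ℕ → Set (Set X), (∀ n, IsLocallyFiniteFamily (f n)) ∧ N = ⋃ n, f n

/-- An *ℵ-space* is a regular Hausdorff space with a σ-locally finite k-network. -/
def IsAlephSpace (X : Type*) [TopologicalSpace X] : Prop :=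
  RegularSpace X ∧ T2Space X ∧ ∃ N : Set (Set X), IsSigmaLocallyFinite N ∧ IsKNetwork N

/-- An *ℵ₀-space* is a regular Hausdorff space with a countable k-network. -/
def IsAleph0Space (X : Type*) [TopologicalSpace X] : Prop :=
  RegularSpace X ∧ T2Space X ∧ ∃ N : Set (Set X), N.Countable ∧ IsKNetwork N

/-!
Points of an ℵ-space are `Gδ`. If `0` is a `Gδ` point of the weak topology, then countably many
functionals separate the points of the space, which therefore has at most `𝔠` elements, and the
unit vectors of `ℓ¹(Γ)` give `|Γ| ≤ 𝔠`.

Conversely, by the Schur property the weakly compact subsets of `ℓ¹(Γ)` are norm compact, so every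
base of the norm topology is a k-network for the weak topology, and it is enough to find a subbase
of the norm topology which is σ-locally finite for the weak topology. Norm convergence in `ℓ¹` to
`z` follows from convergence on the support of `z` together with `limsup ‖y i‖ ≤ ‖z‖`. The balls
about `0` of rational radius control the norm. To control coordinates, identify `Γ` with a set of
reals and let `A` be the trace on `Γ` of a basic interval: the sets of vectors whose restriction to
`A` peaks at `c`, for varying `c ∈ A`, form a weakly locally finite family, since near a given
vector the functional summing the coordinates in `A` outside a finite set is small, while it is
large on the vectors with a peak there. A peak of `z` at `c` is isolated in this sense from the
rest of `z` as soon as the interval avoids the finitely many other large coordinates of `z`.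
-/

section Families

variable {X : Type*} [TopologicalSpace X] {N M : Set (Set X)}

theorem isLocallyFiniteFamily_range {ι : Type*} {f : ι → Set X}
    (hf : LocallyFinite f) : IsLocallyFiniteFamily (range f) := by
  intro x
  obtain ⟨V, hV, hfin⟩ := hf x
  refine ⟨V, hV, (hfin.image f).subset ?_⟩
  rintro _ ⟨⟨i, rfl⟩, hi⟩
  exact mem_image_of_mem f hi

namespace IsLocallyFiniteFamily

theorem locallyFinite (hN : IsLocallyFiniteFamily N) : LocallyFinite ((↑) : N → Set X) := by
  intro x
  obtain ⟨V, hV, hfin⟩ := hN x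
  exact ⟨V, hV, (hfin.preimage Subtype.val_injective.injOn).subset fun A hA ↦ ⟨A.2, hA⟩⟩

theorem mono (hN : IsLocallyFiniteFamily N) (hMN : M ⊆ N) : IsLocallyFiniteFamily M := by
  intro x
  obtain ⟨V, hV, hfin⟩ := hN x
  exact ⟨V, hV, hfin.subset fun A hA ↦ ⟨hMN hA.1, hA.2⟩⟩

theorem of_finite (hN : N.Finite) : IsLocallyFiniteFamily N :=
  fun _ ↦ ⟨univ, univ_mem, hN.subset fun _ hA ↦ hA.1⟩

theorem biUnion {ι : Type*} {s : Set ι} {N : ι → Set (Set X)} (hs : s.Finite)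
    (hN : ∀ i ∈ s, IsLocallyFiniteFamily (N i)) : IsLocallyFiniteFamily (⋃ i ∈ s, N i) := by
  intro x
  choose! V hV hfin using fun i hi ↦ hN i hi x
  refine ⟨⋂ i ∈ s, V i, (biInter_mem hs).2 hV, (hs.biUnion hfin).subset ?_⟩
  rintro A ⟨hA, hAV⟩
  obtain ⟨i, hi, hAi⟩ := mem_iUnion₂.1 hA
  exact mem_biUnion hi ⟨hAi, hAV.mono <| inter_subset_inter_right A <| biInter_subset_of_mem hi⟩

theorem image_sInter (hN : IsLocallyFiniteFamily N) :
    IsLocallyFiniteFamily (sInter '' {F | F ⊆ N}) := by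
  intro x
  obtain ⟨V, hV, hfin⟩ := hN x
  refine ⟨V, hV, (hfin.finite_subsets.image sInter).subset ?_⟩
  rintro _ ⟨⟨F, hF, rfl⟩, hFV⟩
  exact mem_image_of_mem sInter fun A hA ↦
    ⟨hF hA, hFV.mono <| inter_subset_inter_left V <| sInter_subset_of_mem hA⟩

end IsLocallyFiniteFamily

namespace IsSigmaLocallyFinite

theorem iUnion {ι : Type*} [Countable ι] {N : ι → Set (Set X)}
    (hN : ∀ i, IsLocallyFiniteFamily (N i)) : IsSigmaLocallyFinite (⋃ i, N i) := by
  cases isEmpty_or_nonempty ι with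
  | inl _ => exact ⟨fun _ ↦ ∅, fun _ ↦ .of_finite finite_empty, by simp⟩
  | inr _ =>
    obtain ⟨e, he⟩ := exists_surjective_nat ι
    exact ⟨N ∘ e, fun n ↦ hN (e n), (he.iUnion_comp N).symm⟩

theorem union (hN : IsSigmaLocallyFinite N) (hM : IsSigmaLocallyFinite M) :
    IsSigmaLocallyFinite (N ∪ M) := by
  obtain ⟨f, hf, rfl⟩ := hN
  obtain ⟨g, hg, rfl⟩ := hM
  have h_eq : (⋃ n, f n) ∪ ⋃ n, g n = ⋃ n, Sum.elim f g n := by rw [iUnion_sum]; rfl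
  exact h_eq ▸ iUnion (Sum.rec hf hg)

theorem image_sInter_finite (hN : IsSigmaLocallyFinite N) :
    IsSigmaLocallyFinite (sInter '' {F | F.Finite ∧ F ⊆ N}) := by
  obtain ⟨f, hf, rfl⟩ := hN
  have h_eq : sInter '' {F | F.Finite ∧ F ⊆ ⋃ n, f n} =
      ⋃ s : Finset ℕ, sInter '' {F | F.Finite ∧ F ⊆ ⋃ n ∈ s, f n} := by
    refine Subset.antisymm ?_ (iUnion_subset fun s ↦ ?_)
    · rintro _ ⟨F, ⟨hF, hFf⟩, rfl⟩
      obtain ⟨I, hI, hFI⟩ := finite_subset_iUnion hF hFf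
      lift I to Finset ℕ using hI
      exact mem_iUnion.2 ⟨I, F, ⟨hF, hFI⟩, rfl⟩
    · exact image_mono fun F hF ↦ ⟨hF.1, hF.2.trans (iUnion₂_subset_iUnion _ f)⟩
  rw [h_eq]
  exact iUnion fun s ↦ (IsLocallyFiniteFamily.biUnion s.finite_toSet fun n _ ↦ hf n)
    |>.image_sInter.mono (image_mono fun _ ↦ And.right)

end IsSigmaLocallyFinite

theorem IsKNetwork.isNetwork (hN : IsKNetwork N) : IsNetwork N := by
  intro x U hU hxU
  obtain ⟨F, hFN, -, hxF, hFU⟩ := hN {x} U isCompact_singleton hU (singleton_subset_iff.2 hxU)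
  obtain ⟨A, hA, hxA⟩ := hxF rfl
  exact ⟨A, hFN hA, hxA, (subset_sUnion_of_mem hA).trans hFU⟩

theorem IsNetwork.isGδ_singleton [T2Space X] (hN : IsNetwork N) (hσ : IsSigmaLocallyFinite N)
    (x : X) : IsGδ {x} := by
  obtain ⟨f, hf, rfl⟩ := hσ
  let G (n : ℕ) : Set X := ⋃ A : {A : f n // x ∉ closure (A : Set X)}, closure (A : Set X)
  have hG_closed (n : ℕ) : IsClosed (G n) :=
    ((hf n).locallyFinite.closure.comp_injective Subtype.val_injective).isClosed_iUnion
      fun _ ↦ isClosed_closure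
  have h_eq : {x} = ⋂ n, (G n)ᶜ := by
    refine (singleton_subset_iff.2 ?_).antisymm fun y hy ↦ ?_
    · simp only [G, mem_iInter, mem_compl_iff, mem_iUnion, not_exists]
      exact fun n A ↦ A.2
    · by_contra hyx
      obtain ⟨U, V, hU, hV, hyU, hxV, hUV⟩ := t2_separation hyx
      obtain ⟨A, hA, hyA, hAU⟩ := hN y U hU hyU
      obtain ⟨n, hAn⟩ := mem_iUnion.1 hA
      have hxA : x ∉ closure A := fun h ↦
        (hUV.closure_left hV).le_bot ⟨closure_mono hAU h, hxV⟩
      exact mem_iInter.1 hy n <| mem_iUnion.2 ⟨⟨⟨A, hAn⟩, hxA⟩, subset_closure hyA⟩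
  rw [h_eq]
  exact .iInter_of_isOpen fun n ↦ (hG_closed n).isOpen_compl

theorem IsAlephSpace.isGδ_singleton (hX : IsAlephSpace X) (x : X) : IsGδ {x} := by
  obtain ⟨-, _, N, hσ, hN⟩ := hX
  exact hN.isNetwork.isGδ_singleton hσ x

theorem IsKNetwork.of_isTopologicalBasis (hN : IsTopologicalBasis N) : IsKNetwork N := by
  intro K U hK hU hKU
  rw [hN.open_eq_sUnion' hU, sUnion_eq_biUnion] at hKU
  obtain ⟨F, hF, hFfin, hKF⟩ :=
    hK.elim_finite_subcover_image (fun A hA ↦ hN.isOpen hA.1) hKU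
  rw [← sUnion_eq_biUnion] at hKF
  exact ⟨F, fun A hA ↦ (hF hA).1, hFfin, hKF, sUnion_subset fun A hA ↦ (hF hA).2⟩

theorem IsKNetwork.of_image_preimage {E : Type*} [TopologicalSpace E] {f : E → X}
    (hf : Function.Surjective f) (hf_cont : Continuous f)
    (hf_compact : ∀ K, IsCompact K → IsCompact (f ⁻¹' K))
    (hN : IsKNetwork (preimage f '' N)) : IsKNetwork N := by
  intro K U hK hU hKU
  obtain ⟨F, hFN, hFfin, hKF, hFU⟩ :=
    hN _ _ (hf_compact K hK) (hU.preimage hf_cont) (preimage_mono hKU)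
  obtain ⟨G, hGN, rfl⟩ := subset_image_iff.1 hFN
  rw [sUnion_image, ← preimage_iUnion₂, ← sUnion_eq_biUnion,
    hf.preimage_subset_preimage_iff] at hKF hFU
  exact ⟨G, hGN, hFfin.of_finite_image hf.preimage_injective.injOn, hKF, hFU⟩

theorem IsAlephSpace.of_isInducing_generateFrom {E : Type*} [tE : TopologicalSpace E]
    [RegularSpace X] [T2Space X] {f : E → X} (hf : Function.Surjective f) (hf_cont : Continuous f)
    (hf_compact : ∀ K, IsCompact K → IsCompact (f ⁻¹' K)) (hσ : IsSigmaLocallyFinite N)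
    (hN : @Topology.IsInducing E X tE (generateFrom N) f) : IsAlephSpace X := by
  have h_basis : IsTopologicalBasis (preimage f '' (sInter '' {F | F.Finite ∧ F ⊆ N})) :=
    @IsTopologicalBasis.isInducing E X tE (generateFrom N) f _ hN <|
      @isTopologicalBasis_of_subbasis X (generateFrom N) N rfl
  exact ⟨‹_›, ‹_›, _, hσ.image_sInter_finite,
    .of_image_preimage hf hf_cont hf_compact (.of_isTopologicalBasis h_basis)⟩

end Families

section Cardinality

theorem exists_countable_separating_of_isGδ {X ι : Type*} {Y : ι → Type*} [TopologicalSpace X]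
    [∀ i, TopologicalSpace (Y i)] {f : X → ∀ i, Y i} (hf : Topology.IsInducing f) {x : X}
    (hx : IsGδ {x}) : ∃ S : Set ι, S.Countable ∧ ∀ y, (∀ i ∈ S, f y i = f x i) → y = x := by
  obtain ⟨U, hU, hxU⟩ := hx.eq_iInter_nat
  have hbox (n : ℕ) : ∃ I : Finset ι, ∀ y, (∀ i ∈ I, f y i = f x i) → y ∈ U n := by
    obtain ⟨V, hV, hVU⟩ := hf.isOpen_iff.1 (hU n)
    have hxV : f x ∈ V := by
      rw [← mem_preimage, hVU]
      exact mem_iInter.1 (hxU ▸ mem_singleton x) n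
    obtain ⟨I, W, hW, hWV⟩ := isOpen_pi_iff.1 hV _ hxV
    exact ⟨I, fun y hy ↦ hVU ▸ hWV fun i hi ↦ hy i hi ▸ (hW i hi).2⟩
  choose I hI using hbox
  refine ⟨⋃ n, I n, countable_iUnion fun n ↦ (I n).countable_toSet, fun y hy ↦ ?_⟩
  rw [← mem_singleton_iff, hxU]
  exact mem_iInter.2 fun n ↦ hI n y fun i hi ↦ hy i (mem_iUnion_of_mem n hi)

theorem mk_le_continuum_of_isGδ_zero_weakSpace (𝕜 E : Type*) [CommRing 𝕜]
    [TopologicalSpace 𝕜] [IsTopologicalRing 𝕜] [AddCommGroup E] [Module 𝕜 E] [TopologicalSpace E]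
    (h𝕜 : Cardinal.mk 𝕜 ≤ Cardinal.continuum) (hE : IsGδ {(0 : WeakSpace 𝕜 E)}) :
    Cardinal.mk E ≤ Cardinal.continuum := by
  have h_inducing : Topology.IsInducing
      fun (w : WeakSpace 𝕜 E) (φ : E →L[𝕜] 𝕜) ↦ φ ((toWeakSpace 𝕜 E).symm w) := ⟨rfl⟩
  obtain ⟨S, hS, hS_sep⟩ := exists_countable_separating_of_isGδ h_inducing hE
  have h_inj : Function.Injective fun (x : E) (φ : S) ↦ φ.1 x := fun x y hxy ↦ by
    refine sub_eq_zero.1 <| (toWeakSpace 𝕜 E).map_eq_zero_iff.1 <| hS_sep _ fun φ hφ ↦ ?_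
    simpa [sub_eq_zero] using congrFun hxy ⟨φ, hφ⟩
  have h_pow : Cardinal.mk (S → 𝕜) ≤ Cardinal.continuum := by
    rw [Cardinal.mk_arrow, ← Cardinal.continuum_power_aleph0]
    refine (Cardinal.power_le_power_right (Cardinal.lift_le_continuum.2 h𝕜)).trans ?_
    exact Cardinal.power_le_power_left Cardinal.continuum_ne_zero
      (Cardinal.lift_le_aleph0.2 hS.le_aleph0)
  exact Cardinal.lift_le_continuum.1 <|
    (Cardinal.lift_mk_le_lift_mk_of_injective h_inj).trans (Cardinal.lift_le_continuum.2 h_pow)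

theorem mk_rclike_le_continuum (𝕜 : Type*) [RCLike 𝕜] : Cardinal.mk 𝕜 ≤ Cardinal.continuum := by
  have h_inj : Function.Injective fun z : 𝕜 ↦ (RCLike.re z, RCLike.im z) :=
    fun z w hzw ↦ RCLike.ext (congrArg Prod.fst hzw) (congrArg Prod.snd hzw)
  simpa [Cardinal.mk_real] using Cardinal.lift_mk_le_lift_mk_of_injective h_inj

end Cardinality

section WeakCompactness

open Topology

variable {𝕜 E : Type*} [RCLike 𝕜] [NormedAddCommGroup E] [NormedSpace 𝕜 E]

theorem continuous_apply_toWeakSpace_symm (φ : StrongDual 𝕜 E) :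
    Continuous fun w : WeakSpace 𝕜 E ↦ φ ((toWeakSpace 𝕜 E).symm w) :=
  WeakBilin.eval_continuous (topDualPairing 𝕜 E).flip φ

theorem isClosed_image_toWeakSpace {Y : Submodule 𝕜 E} (hY : IsClosed (Y : Set E)) :
    IsClosed (toWeakSpace 𝕜 E '' Y) := by
  let _ : NormedSpace ℝ E := .restrictScalars ℝ 𝕜 E
  have : IsScalarTower ℝ 𝕜 E := RestrictScalars.isScalarTower ℝ 𝕜 E
  have hY_convex : Convex ℝ (Y : Set E) := (Y.restrictScalars ℝ).convex
  rw [← closure_eq_iff_isClosed, ← hY_convex.toWeakSpace_closure 𝕜, hY.closure_eq]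

variable (𝕜) in
theorem exists_seq_strongDual_separating {s : Set E} (hs : IsSeparable s) :
    ∃ φ : ℕ → StrongDual 𝕜 E, ∀ x ∈ s, (∀ n, φ n x = 0) → x = 0 := by
  obtain ⟨c, hc, hsc⟩ := hs
  obtain rfl | hc_ne := c.eq_empty_or_nonempty
  · exact ⟨0, fun x hx ↦ by simpa using hsc hx⟩
  obtain ⟨u, rfl⟩ := hc.exists_eq_range hc_ne
  choose φ hφ_norm hφ_eq using fun n ↦ exists_dual_vector'' 𝕜 (u n)
  refine ⟨φ, fun x hx hφx ↦ norm_le_zero_iff.1 <| le_of_forall_pos_lt_add fun ε hε ↦ ?_⟩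
  obtain ⟨_, ⟨n, rfl⟩, hn⟩ := Metric.mem_closure_iff.1 (hsc hx) (ε / 2) (half_pos hε)
  rw [dist_eq_norm'] at hn
  have hu : ‖u n‖ ≤ ‖u n - x‖ := calc
    ‖u n‖ = ‖φ n (u n - x)‖ := by rw [map_sub, hφx, sub_zero, hφ_eq, RCLike.norm_ofReal, abs_norm]
    _ ≤ ‖u n - x‖ := (φ n).le_of_opNorm_le (hφ_norm n) _ |>.trans_eq (one_mul _)
  have hx_le : ‖x‖ ≤ ‖u n‖ + ‖u n - x‖ := norm_le_norm_add_norm_sub (u n) x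
  linarith

theorem metrizableSpace_of_isCompact_weakSpace_of_isSeparable {K : Set (WeakSpace 𝕜 E)}
    (hK : IsCompact K) {Y : Submodule 𝕜 E} (hY : IsSeparable (Y : Set E))
    (hKY : K ⊆ toWeakSpace 𝕜 E '' Y) : MetrizableSpace K := by
  have : CompactSpace K := isCompact_iff_compactSpace.1 hK
  obtain ⟨φ, hφ⟩ := exists_seq_strongDual_separating 𝕜 hY
  refine Metric.PiNatEmbed.TopologicalSpace.MetrizableSpace.of_countable_separating
    (fun n (w : K) ↦ φ n ((toWeakSpace 𝕜 E).symm w))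
    (fun n ↦ (continuous_apply_toWeakSpace_symm (φ n)).comp continuous_subtype_val) ?_
  rintro ⟨v, hv⟩ ⟨w, hw⟩ hvw
  obtain ⟨x, hx, rfl⟩ := hKY hv
  obtain ⟨y, hy, rfl⟩ := hKY hw
  contrapose! hvw
  simpa [sub_eq_zero] using hφ (x - y) (Y.sub_mem hx hy) fun n ↦ by
    simpa [sub_eq_zero] using hvw n

theorem isSeqCompact_of_isCompact_weakSpace {K : Set (WeakSpace 𝕜 E)} (hK : IsCompact K) :
    IsSeqCompact K := by
  intro u hu
  let Y := (Submodule.span 𝕜 (range fun n ↦ (toWeakSpace 𝕜 E).symm (u n))).topologicalClosure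
  have hY_closed : IsClosed (Y : Set E) := Submodule.isClosed_topologicalClosure _
  have hY_sep : IsSeparable (Y : Set E) := ((countable_range _).isSeparable.span (R := 𝕜)).closure
  have huY (n : ℕ) : u n ∈ toWeakSpace 𝕜 E '' Y :=
    ⟨_, Submodule.le_topologicalClosure _ (Submodule.subset_span (mem_range_self n)), by simp⟩
  have hKY : IsCompact (K ∩ toWeakSpace 𝕜 E '' Y) :=
    hK.inter_right (isClosed_image_toWeakSpace hY_closed)
  have := isCompact_iff_compactSpace.1 hKY
  have := metrizableSpace_of_isCompact_weakSpace_of_isSeparable hKY hY_sep inter_subset_right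
  have hKY_seq : IsSeqCompact (K ∩ toWeakSpace 𝕜 E '' Y) :=
    isSeqCompact_iff_seqCompactSpace.2 inferInstance
  obtain ⟨w, hw, hconv⟩ := hKY_seq fun n ↦ ⟨hu n, huY n⟩
  exact ⟨w, hw.1, hconv⟩

variable (𝕜 E) in
/-- The Schur property: every weakly null sequence is norm null. -/
def HasSchurProperty : Prop :=
  ∀ x : ℕ → E, (∀ φ : StrongDual 𝕜 E, Tendsto (fun n ↦ φ (x n)) atTop (𝓝 0)) →
    Tendsto x atTop (𝓝 0)

theorem HasSchurProperty.isCompact_preimage_toWeakSpace (hE : HasSchurProperty 𝕜 E)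
    {K : Set (WeakSpace 𝕜 E)} (hK : IsCompact K) : IsCompact (toWeakSpace 𝕜 E ⁻¹' K) := by
  refine IsSeqCompact.isCompact fun x hx ↦ ?_
  obtain ⟨w, hw, ψ, hψ, hconv⟩ :=
    isSeqCompact_of_isCompact_weakSpace hK (x := fun n ↦ toWeakSpace 𝕜 E (x n)) hx
  obtain ⟨z, rfl⟩ := (toWeakSpace 𝕜 E).surjective w
  refine ⟨z, hw, ψ, hψ, tendsto_sub_nhds_zero_iff.1 <| hE _ fun φ ↦ ?_⟩
  simpa using ((continuous_apply_toWeakSpace_symm φ).tendsto _).comp hconv |>.sub_const (φ z)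

end WeakCompactness

section SetSums

open scoped lp ENNReal Topology

variable {α E : Type*} [NormedAddCommGroup E]

section Restrict

variable (𝕜 : Type*) [NormedRing 𝕜] [Module 𝕜 E] [IsBoundedSMul 𝕜 E] (p : ℝ≥0∞) [Fact (1 ≤ p)]

/-- The coordinate projection `x ↦ x · 1_A` of `ℓ^p(α, E)`. -/
noncomputable def lpRestrict (A : Set α) : ℓ^p(α, E) →L[𝕜] ℓ^p(α, E) :=
  let P : ℓ^p(α, E) →ₗ[𝕜] ℓ^p(α, E) :=
    { toFun x := ⟨A.indicator x, (lp.memℓp x).mono' fun _ ↦ norm_indicator_le_norm_self _ _⟩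
      map_add' x y := lp.ext <| indicator_add A x y
      map_smul' c x := lp.ext <| indicator_const_smul A c x }
  P.mkContinuous 1 fun x ↦ by
    rw [one_mul]
    exact lp.norm_mono (zero_lt_one.trans_le Fact.out).ne' fun a ↦ norm_indicator_le_norm_self x a

variable {p}

@[simp]
theorem coe_lpRestrict (A : Set α) (x : ℓ^p(α, E)) : ⇑(lpRestrict 𝕜 p A x) = A.indicator x :=
  rfl

theorem norm_lpRestrict_mono {A B : Set α} (hAB : A ⊆ B) (x : ℓ^p(α, E)) :
    ‖lpRestrict 𝕜 p A x‖ ≤ ‖lpRestrict 𝕜 p B x‖ :=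
  lp.norm_mono (zero_lt_one.trans_le Fact.out).ne' fun _ ↦ norm_indicator_le_of_subset hAB _ _

theorem exists_finset_forall_disjoint_norm_lpRestrict_lt (hp : p ≠ ∞) (x : ℓ^p(α, E)) {ε : ℝ}
    (hε : 0 < ε) : ∃ S : Finset α, ∀ A : Set α, Disjoint A S → ‖lpRestrict 𝕜 p A x‖ < ε := by
  classical
  obtain ⟨S, hS⟩ := (Metric.tendsto_nhds.1 (lp.hasSum_single hp x) ε hε).exists
  refine ⟨S, fun A hA ↦ (lp.norm_mono (zero_lt_one.trans_le Fact.out).ne' fun a ↦ ?_).trans_lt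
    (dist_eq_norm' _ x ▸ hS)⟩
  by_cases ha : a ∈ A
  · have haS : a ∉ S := disjoint_left.1 hA ha
    have h_sum : (∑ b ∈ S, lp.single p b (x b) : ℓ^p(α, E)) a = 0 := by
      rw [lp.coeFn_sum]
      refine (Finset.sum_apply a S _).trans <| Finset.sum_eq_zero fun b hb ↦ ?_
      exact lp.single_apply_ne (E := fun _ ↦ E) p b (x b) (ne_of_mem_of_not_mem hb haS).symm
    rw [coe_lpRestrict, indicator_of_mem ha, lp.coeFn_sub, Pi.sub_apply, h_sum, sub_zero]
  · simp [ha]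

end Restrict

theorem summable_norm_ellOne (x : ℓ¹(α, E)) : Summable fun a ↦ ‖x a‖ := by
  simpa using x.2.summable

theorem norm_ellOne_eq_tsum (x : ℓ¹(α, E)) : ‖x‖ = ∑' a, ‖x a‖ := by
  simpa using lp.norm_eq_tsum_rpow (by simp) x

variable (𝕜 : Type*) [NormedRing 𝕜] [Module 𝕜 E] [IsBoundedSMul 𝕜 E] [CompleteSpace E]

/-- The functional `x ↦ ∑_{a ∈ A} x a` on `ℓ¹(α, E)`. -/
noncomputable def setSumCLM (A : Set α) : ℓ¹(α, E) →L[𝕜] E :=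
  lp.tsumCLM 𝕜 α E ∘L lpRestrict 𝕜 1 A

theorem setSumCLM_apply (A : Set α) (x : ℓ¹(α, E)) : setSumCLM 𝕜 A x = ∑' a, A.indicator x a :=
  rfl

theorem norm_setSumCLM_le (A : Set α) (x : ℓ¹(α, E)) :
    ‖setSumCLM 𝕜 A x‖ ≤ ‖lpRestrict 𝕜 1 A x‖ :=
  lp.norm_tsum_le _

@[simp]
theorem setSumCLM_singleton (a : α) (x : ℓ¹(α, E)) : setSumCLM 𝕜 {a} x = x a := by
  rw [setSumCLM_apply, ← tsum_subtype, tsum_singleton]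

theorem setSumCLM_union {A B : Set α} (hAB : Disjoint A B) (x : ℓ¹(α, E)) :
    setSumCLM 𝕜 (A ∪ B) x = setSumCLM 𝕜 A x + setSumCLM 𝕜 B x := by
  have hx : Summable x := .of_norm (summable_norm_ellOne x)
  simp_rw [setSumCLM_apply, indicator_union_of_disjoint hAB]
  exact (hx.indicator A).tsum_add (hx.indicator B)

theorem tsum_abs_le_of_forall_abs_tsum_indicator_le {f : α → ℝ} (hf : Summable f) {M : ℝ}
    (hM : ∀ A : Set α, |∑' a, A.indicator f a| ≤ M) : ∑' a, |f a| ≤ 2 * M := by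
  let A : Set α := {a | 0 ≤ f a}
  have h_abs (a : α) : |f a| = A.indicator f a - Aᶜ.indicator f a := by
    by_cases ha : 0 ≤ f a
    · simp [A, ha]
    · simp [A, ha, abs_of_neg (not_le.1 ha)]
  calc ∑' a, |f a| = ∑' a, A.indicator f a - ∑' a, Aᶜ.indicator f a := by
        simp_rw [h_abs, (hf.indicator A).tsum_sub (hf.indicator Aᶜ)]
    _ ≤ 2 * M := by linarith [(abs_le.1 (hM A)).2, (abs_le.1 (hM Aᶜ)).1]

theorem continuous_setSumCLM_boolean (x : ℓ¹(α, E)) :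
    Continuous fun b : α → Bool ↦ setSumCLM 𝕜 {a | b a} x := by
  refine continuous_tsum (fun a ↦ ?_) (summable_norm_ellOne x) fun a b ↦
    norm_indicator_le_norm_self _ _
  have h_coord : Continuous fun b : α → Bool ↦ if b a then x a else 0 :=
    (continuous_of_discreteTopology (f := fun t : Bool ↦ if t then x a else 0)).comp
      (continuous_apply (A := fun _ ↦ Bool) a)
  simpa [indicator_apply] using h_coord

theorem exists_finset_forall_disjoint_norm_setSumCLM_le {x : ℕ → ℓ¹(α, E)}
    (hx : ∀ A, Tendsto (fun n ↦ setSumCLM 𝕜 A (x n)) atTop (𝓝 0)) {ε : ℝ} (hε : 0 < ε) :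
    ∃ S : Finset α, ∀ᶠ n in atTop, ∀ A : Set α, Disjoint A S → ‖setSumCLM 𝕜 A (x n)‖ ≤ ε := by
  let F (N : ℕ) : Set (α → Bool) := {b | ∀ n ≥ N, ‖setSumCLM 𝕜 {a | b a} (x n)‖ ≤ ε / 2}
  have hF_closed (N : ℕ) : IsClosed (F N) := by
    simp only [F, ofPred_forall]
    exact isClosed_iInter fun n ↦ isClosed_iInter fun _ ↦
      isClosed_le (continuous_setSumCLM_boolean 𝕜 (x n)).norm continuous_const
  have hF_cover : ⋃ N, F N = univ := eq_univ_of_forall fun b ↦ by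
    simpa [F] using ((tendsto_zero_iff_norm_tendsto_zero.1 (hx {a | b a})).eventually_le_const
      (half_pos hε)).exists_forall_of_atTop
  obtain ⟨N, b, hb⟩ := nonempty_interior_of_iUnion_of_closed hF_closed hF_cover
  obtain ⟨S, U, hU, hUF⟩ := isOpen_pi_iff.1 isOpen_interior b hb
  have h_agree {A : Set α} (hA : ∀ a ∈ S, a ∈ A ↔ b a) {n : ℕ} (hn : n ≥ N) :
      ‖setSumCLM 𝕜 A (x n)‖ ≤ ε / 2 := by
    classical
    have hAF : (fun a ↦ decide (a ∈ A)) ∈ F N :=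
      interior_subset <| hUF fun a ha ↦ by simpa [hA a ha] using (hU a ha).2
    simpa using hAF n hn
  refine ⟨S, eventually_atTop.2 ⟨N, fun n hn A hA ↦ ?_⟩⟩
  let B : Set α := {a | b a} ∩ S
  have hB (a : α) (ha : a ∈ S) : a ∈ B ↔ b a := by simp [B, ha]
  have hBA (a : α) (ha : a ∈ S) : a ∈ B ∪ A ↔ b a := by
    simp [hB a ha, disjoint_right.1 hA (Finset.mem_coe.2 ha)]
  have h_union := setSumCLM_union 𝕜 (hA.symm.mono_left inter_subset_right : Disjoint B A) (x n)
  calc ‖setSumCLM 𝕜 A (x n)‖ = ‖setSumCLM 𝕜 (B ∪ A) (x n) - setSumCLM 𝕜 B (x n)‖ := by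
        rw [h_union, add_sub_cancel_left]
    _ ≤ ε / 2 + ε / 2 := (norm_sub_le _ _).trans (add_le_add (h_agree hBA hn) (h_agree hB hn))
    _ = ε := add_halves ε

theorem eventually_forall_norm_setSumCLM_le {x : ℕ → ℓ¹(α, E)}
    (hx : ∀ A, Tendsto (fun n ↦ setSumCLM 𝕜 A (x n)) atTop (𝓝 0)) {ε : ℝ} (hε : 0 < ε) :
    ∀ᶠ n in atTop, ∀ A : Set α, ‖setSumCLM 𝕜 A (x n)‖ ≤ ε := by
  obtain ⟨S, hS⟩ := exists_finset_forall_disjoint_norm_setSumCLM_le 𝕜 hx (half_pos hε)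
  have hS_sub : ∀ᶠ n in atTop, ∀ A ∈ 𝒫 (S : Set α), ‖setSumCLM 𝕜 A (x n)‖ ≤ ε / 2 :=
    (S.finite_toSet.finite_subsets.eventually_all).2 fun A _ ↦
      (tendsto_zero_iff_norm_tendsto_zero.1 (hx A)).eventually_le_const (half_pos hε)
  filter_upwards [hS, hS_sub] with n hn_disj hn_sub A
  calc ‖setSumCLM 𝕜 A (x n)‖
      = ‖setSumCLM 𝕜 (A ∩ S) (x n) + setSumCLM 𝕜 (A \ S) (x n)‖ := by
        rw [← setSumCLM_union 𝕜 disjoint_sdiff_inter.symm, inter_union_sdiff]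
    _ ≤ ε / 2 + ε / 2 := (norm_add_le _ _).trans <|
        add_le_add (hn_sub _ inter_subset_right) (hn_disj _ disjoint_sdiff_left)
    _ = ε := add_halves ε

end SetSums

section EllOne

open scoped lp ENNReal Topology

variable {α 𝕜 : Type*} [RCLike 𝕜]

theorem norm_rclike_le_abs_re_add_abs_im (z : 𝕜) : ‖z‖ ≤ |RCLike.re z| + |RCLike.im z| := by
  refine le_of_sq_le_sq ?_ (by positivity)
  rw [RCLike.norm_sq_eq_def]
  nlinarith [sq_abs (RCLike.re z), sq_abs (RCLike.im z),
    mul_nonneg (abs_nonneg (RCLike.re z)) (abs_nonneg (RCLike.im z))]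

theorem norm_ellOne_le_of_forall_norm_setSumCLM_le {x : ℓ¹(α, 𝕜)} {M : ℝ}
    (hM : ∀ A, ‖setSumCLM 𝕜 A x‖ ≤ M) : ‖x‖ ≤ 4 * M := by
  have hx : Summable x := .of_norm (summable_norm_ellOne x)
  have h_part (φ : 𝕜 →L[ℝ] ℝ) (hφ : ∀ z, |φ z| ≤ ‖z‖) : ∑' a, |φ (x a)| ≤ 2 * M := by
    refine tsum_abs_le_of_forall_abs_tsum_indicator_le (φ.summable hx) fun A ↦ ?_
    calc |∑' a, A.indicator (fun a ↦ φ (x a)) a| = |φ (setSumCLM 𝕜 A x)| := by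
          rw [setSumCLM_apply, φ.map_tsum (hx.indicator A)]
          rw [← Function.comp_def φ x, indicator_comp_of_zero φ.map_zero, Function.comp_def]
      _ ≤ M := (hφ _).trans (hM A)
  have h_re := h_part RCLike.reCLM RCLike.abs_re_le_norm
  have h_im := h_part RCLike.imCLM RCLike.abs_im_le_norm
  have h_re_sum : Summable fun a ↦ |RCLike.re (x a)| := (RCLike.reCLM.summable hx).abs
  have h_im_sum : Summable fun a ↦ |RCLike.im (x a)| := (RCLike.imCLM.summable hx).abs
  calc ‖x‖ = ∑' a, ‖x a‖ := norm_ellOne_eq_tsum x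
    _ ≤ ∑' a, (|RCLike.re (x a)| + |RCLike.im (x a)|) :=
        (summable_norm_ellOne x).tsum_le_tsum (fun a ↦ norm_rclike_le_abs_re_add_abs_im _)
          (h_re_sum.add h_im_sum)
    _ = ∑' a, |RCLike.re (x a)| + ∑' a, |RCLike.im (x a)| := h_re_sum.tsum_add h_im_sum
    _ ≤ 2 * M + 2 * M := add_le_add h_re h_im
    _ = 4 * M := by ring

variable (α 𝕜) in
theorem hasSchurProperty_ellOne : HasSchurProperty 𝕜 ℓ¹(α, 𝕜) := by
  intro x hx
  refine Metric.tendsto_nhds.2 fun ε hε ↦ ?_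
  filter_upwards [eventually_forall_norm_setSumCLM_le 𝕜 (fun A ↦ hx (setSumCLM 𝕜 A))
    (show 0 < ε / 5 by positivity)] with n hn
  rw [dist_zero_right]
  linarith [norm_ellOne_le_of_forall_norm_setSumCLM_le hn]

end EllOne

section EllOneConvergence

open scoped lp ENNReal Topology

variable {α E : Type*} [NormedAddCommGroup E]

theorem norm_sub_add_sum_le_ellOne (y z : ℓ¹(α, E)) (S : Finset α) :
    ‖y - z‖ + ∑ a ∈ S, (‖y a‖ + ‖z a‖ - ‖y a - z a‖) ≤ ‖y‖ + ‖z‖ := by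
  have hy := summable_norm_ellOne y
  have hz := summable_norm_ellOne z
  have hyz : Summable fun a ↦ ‖y a - z a‖ := summable_norm_ellOne (y - z)
  have h_partial := ((hy.add hz).sub hyz).sum_le_tsum S fun a _ ↦
    sub_nonneg.2 (norm_sub_le (y a) (z a))
  rw [(hy.add hz).tsum_sub hyz, hy.tsum_add hz] at h_partial
  have h_norm : ‖y - z‖ = ∑' a, ‖y a - z a‖ := norm_ellOne_eq_tsum (y - z)
  linarith [norm_ellOne_eq_tsum y, norm_ellOne_eq_tsum z]

theorem tendsto_ellOne_of_tendsto_apply {ι : Type*} {l : Filter ι} {y : ι → ℓ¹(α, E)}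
    {z : ℓ¹(α, E)} (h_norm : ∀ r > ‖z‖, ∀ᶠ i in l, ‖y i‖ < r)
    (h_apply : ∀ a, z a ≠ 0 → Tendsto (fun i ↦ y i a) l (𝓝 (z a))) : Tendsto y l (𝓝 z) := by
  refine Metric.tendsto_nhds.2 fun ε hε ↦ ?_
  have hz : HasSum (fun a ↦ ‖z a‖) ‖z‖ :=
    norm_ellOne_eq_tsum z ▸ (summable_norm_ellOne z).hasSum
  obtain ⟨S, hS⟩ := (hz.eventually_const_lt (sub_lt_self ‖z‖ (by positivity : 0 < ε / 4))).exists
  have h_term (a : α) :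
      Tendsto (fun i ↦ ‖y i a‖ + ‖z a‖ - ‖y i a - z a‖) l (𝓝 (2 * ‖z a‖)) := by
    rcases eq_or_ne (z a) 0 with hza | hza
    · simpa [hza] using tendsto_const_nhds
    · have hya := h_apply a hza
      simpa [two_mul] using (hya.norm.add_const ‖z a‖).sub (hya.sub_const (z a)).norm
  have h_sum : Tendsto (fun i ↦ ∑ a ∈ S, (‖y i a‖ + ‖z a‖ - ‖y i a - z a‖)) l
      (𝓝 (2 * ∑ a ∈ S, ‖z a‖)) := by
    rw [Finset.mul_sum]
    exact tendsto_finsetSum S fun a _ ↦ h_term a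
  filter_upwards [h_norm (‖z‖ + ε / 4) (by linarith),
    h_sum.eventually_const_lt (sub_lt_self _ (by positivity : 0 < ε / 4))] with i hi_norm hi_sum
  rw [dist_eq_norm]
  linarith [norm_sub_add_sum_le_ellOne (y i) z S]

end EllOneConvergence

section PeakSets

open scoped lp ENNReal Topology

variable {α 𝕜 : Type*} [RCLike 𝕜]

/-- The vectors of `ℓ¹(α, 𝕜)` whose restriction to `A` is concentrated at the coordinate `c`, with
threshold `δ`, and whose value at `c` lies in `I`. -/
def peakSet (A : Set α) (δ : ℝ) (I : Set 𝕜) (c : α) : Set (WeakSpace 𝕜 ℓ¹(α, 𝕜)) :=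
  (toWeakSpace 𝕜 ℓ¹(α, 𝕜)).symm ⁻¹'
    {x | x c ∈ I ∧ 2 * δ < ‖x c‖ ∧ ‖lpRestrict 𝕜 1 (A \ {c}) x‖ < δ}

theorem lt_norm_setSumCLM_of_mem_peakSet {A B : Set α} {δ : ℝ} {I : Set 𝕜} {c : α} (hBA : B ⊆ A)
    (hcB : c ∈ B) {w : WeakSpace 𝕜 ℓ¹(α, 𝕜)} (hw : w ∈ peakSet A δ I c) :
    δ < ‖setSumCLM 𝕜 B ((toWeakSpace 𝕜 _).symm w)‖ := by
  obtain ⟨-, hc, hA⟩ := hw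
  set x := (toWeakSpace 𝕜 ℓ¹(α, 𝕜)).symm w
  have h_rest : ‖setSumCLM 𝕜 (B \ {c}) x‖ < δ :=
    (norm_setSumCLM_le 𝕜 _ x).trans_lt <|
      (norm_lpRestrict_mono 𝕜 (sdiff_subset_sdiff_left hBA) x).trans_lt hA
  have h_split : setSumCLM 𝕜 B x = x c + setSumCLM 𝕜 (B \ {c}) x := by
    rw [← setSumCLM_singleton 𝕜 c, ← setSumCLM_union 𝕜 disjoint_sdiff_right,
      union_sdiff_cancel (singleton_subset_iff.2 hcB)]
  rw [h_split]
  linarith [norm_le_add_norm_add (x c) (setSumCLM 𝕜 (B \ {c}) x)]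

theorem locallyFinite_peakSet (A : Set α) {δ : ℝ} (hδ : 0 < δ) (I : Set 𝕜) :
    LocallyFinite fun c : A ↦ peakSet A δ I c := by
  intro w
  obtain ⟨S, hS⟩ := exists_finset_forall_disjoint_norm_lpRestrict_lt 𝕜 ENNReal.one_ne_top
    ((toWeakSpace 𝕜 ℓ¹(α, 𝕜)).symm w) hδ
  let V : Set (WeakSpace 𝕜 ℓ¹(α, 𝕜)) := {v | ‖setSumCLM 𝕜 (A \ S) ((toWeakSpace 𝕜 _).symm v)‖ < δ}
  have hV_open : IsOpen V :=
    isOpen_lt (continuous_apply_toWeakSpace_symm (setSumCLM 𝕜 (A \ S))).norm continuous_const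
  have hwV : w ∈ V := (norm_setSumCLM_le 𝕜 _ _).trans_lt (hS _ disjoint_sdiff_left)
  refine ⟨V, hV_open.mem_nhds hwV, (S.finite_toSet.preimage Subtype.val_injective.injOn).subset ?_⟩
  rintro c ⟨v, hv_peak, hvV⟩
  by_contra hcS
  exact (lt_norm_setSumCLM_of_mem_peakSet sdiff_subset ⟨c.2, hcS⟩ hv_peak).not_gt hvV

theorem isOpen_preimage_toWeakSpace_peakSet (A : Set α) (δ : ℝ) {I : Set 𝕜} (hI : IsOpen I)
    (c : α) : IsOpen (toWeakSpace 𝕜 ℓ¹(α, 𝕜) ⁻¹' peakSet A δ I c) := by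
  have h_apply : Continuous fun x : ℓ¹(α, 𝕜) ↦ x c :=
    (setSumCLM (E := 𝕜) 𝕜 {c}).continuous.congr (setSumCLM_singleton 𝕜 c)
  exact (hI.preimage h_apply).and <| (isOpen_lt continuous_const h_apply.norm).and <|
    isOpen_lt (lpRestrict 𝕜 1 (A \ {c})).continuous.norm continuous_const

variable {Y : Type*} [TopologicalSpace Y] [SecondCountableTopology Y] {g : α → Y}

variable (𝕜) in
/-- A σ-locally finite family of subsets of the weak space `ℓ¹(α, 𝕜)` which, for injective `g`, is
a subbase of the norm topology: the balls about `0` of rational radius, which are not locally finite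
but countable in number, and the peak sets for the supports `g ⁻¹' B`, with `B` from a countable
basis. -/
def ellOneSubbase (g : α → Y) : Set (Set (WeakSpace 𝕜 ℓ¹(α, 𝕜))) :=
  range (fun r : ℚ ↦ {w | ‖(toWeakSpace 𝕜 ℓ¹(α, 𝕜)).symm w‖ < r}) ∪
    ⋃ i : ℕ × countableBasis Y × countableBasis 𝕜,
      range fun c : g ⁻¹' i.2.1 ↦ peakSet (g ⁻¹' i.2.1) (1 / (i.1 + 1)) i.2.2 c

theorem isSigmaLocallyFinite_ellOneSubbase (g : α → Y) :
    IsSigmaLocallyFinite (ellOneSubbase 𝕜 g) := by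
  have h_balls : IsSigmaLocallyFinite
      (range fun r : ℚ ↦ {w | ‖(toWeakSpace 𝕜 ℓ¹(α, 𝕜)).symm w‖ < r}) := by
    rw [← iUnion_singleton_eq_range]
    exact .iUnion fun r ↦ .of_finite (finite_singleton _)
  exact h_balls.union <| .iUnion fun i ↦
    isLocallyFiniteFamily_range <| locallyFinite_peakSet _ Nat.one_div_pos_of_nat _

theorem isOpen_preimage_toWeakSpace_of_mem_ellOneSubbase {U : Set (WeakSpace 𝕜 ℓ¹(α, 𝕜))}
    (hU : U ∈ ellOneSubbase 𝕜 g) : IsOpen (toWeakSpace 𝕜 ℓ¹(α, 𝕜) ⁻¹' U) := by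
  rcases hU with ⟨r, rfl⟩ | hU
  · exact isOpen_lt continuous_norm continuous_const
  · obtain ⟨i, c, rfl⟩ := mem_iUnion.1 hU
    exact isOpen_preimage_toWeakSpace_peakSet _ _ (isOpen_of_mem_countableBasis i.2.2.2) _

theorem exists_peakSet_mem_ellOneSubbase [T1Space Y] (hg : Function.Injective g) {z : ℓ¹(α, 𝕜)}
    {a : α} (hza : z a ≠ 0) {O : Set 𝕜} (hO : O ∈ 𝓝 (z a)) :
    ∃ A δ, ∃ I ⊆ O, peakSet A δ I a ∈ ellOneSubbase 𝕜 g ∧ toWeakSpace 𝕜 _ z ∈ peakSet A δ I a := by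
  obtain ⟨I, hI, hzI, h_sub⟩ := (isBasis_countableBasis 𝕜).mem_nhds_iff.1 hO
  obtain ⟨n, hn⟩ := exists_nat_one_div_lt (half_pos (norm_pos_iff.2 hza))
  obtain ⟨S, hS⟩ := exists_finset_forall_disjoint_norm_lpRestrict_lt 𝕜 ENNReal.one_ne_top z
    (Nat.one_div_pos_of_nat (α := ℝ) (n := n))
  have hga : g a ∉ g '' (S \ {a}) := by simp [hg.eq_iff]
  obtain ⟨B, hB, haB, hBS⟩ := (isBasis_countableBasis Y).exists_subset_of_mem_open hga
    ((S.finite_toSet.sdiff.image g).isClosed.isOpen_compl)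
  have h_disj : Disjoint (g ⁻¹' B \ {a}) S :=
    disjoint_left.2 fun b hb hbS ↦ hBS hb.1 (mem_image_of_mem g ⟨hbS, hb.2⟩)
  have h_peak : 2 * (1 / (n + 1 : ℝ)) < ‖z a‖ := by linarith
  refine ⟨g ⁻¹' B, 1 / (n + 1), I, h_sub, ?_, hzI, h_peak, hS _ h_disj⟩
  exact .inr <| mem_iUnion.2 ⟨(n, ⟨B, hB⟩, ⟨I, hI⟩), ⟨a, haB⟩, rfl⟩

theorem isInducing_toWeakSpace_generateFrom_ellOneSubbase [T1Space Y] (hg : Function.Injective g) :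
    @Topology.IsInducing _ _ _ (generateFrom (ellOneSubbase 𝕜 g)) (toWeakSpace 𝕜 ℓ¹(α, 𝕜)) := by
  let t := generateFrom (ellOneSubbase 𝕜 g)
  have h_cont : @Continuous _ _ _ t (toWeakSpace 𝕜 ℓ¹(α, 𝕜)) :=
    continuous_generateFrom_iff.2 fun U ↦ isOpen_preimage_toWeakSpace_of_mem_ellOneSubbase
  refine (@Topology.isInducing_iff_nhds _ _ _ t _).2 fun z ↦ le_antisymm
    (@Continuous.tendsto _ _ _ t _ h_cont z).le_comap ?_
  have h_mem {U} (hU : U ∈ ellOneSubbase 𝕜 g) (hz : toWeakSpace 𝕜 _ z ∈ U) :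
      ∀ᶠ y in comap (toWeakSpace 𝕜 ℓ¹(α, 𝕜)) (@nhds _ t (toWeakSpace 𝕜 _ z)),
        toWeakSpace 𝕜 _ y ∈ U :=
    preimage_mem_comap <| @IsOpen.mem_nhds _ t _ _ (isOpen_generateFrom_of_mem hU) hz
  refine tendsto_id'.1 <| tendsto_ellOne_of_tendsto_apply (fun r hr ↦ ?_) fun a hza O hO ↦ ?_
  · obtain ⟨q, hzq, hqr⟩ := exists_rat_btwn hr
    exact (h_mem (.inl (mem_range_self q)) hzq).mono fun y hy ↦ hy.trans hqr
  · obtain ⟨A, δ, I, h_sub, hU, hz⟩ := exists_peakSet_mem_ellOneSubbase hg hza hO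
    exact (h_mem hU hz).mono fun y hy ↦ h_sub hy.1

theorem isAlephSpace_weakSpace_ellOne [T1Space Y] (hg : Function.Injective g) :
    IsAlephSpace (WeakSpace 𝕜 ℓ¹(α, 𝕜)) :=
  .of_isInducing_generateFrom (toWeakSpace 𝕜 _).surjective (toWeakSpaceCLM 𝕜 _).continuous
    (fun _ ↦ (hasSchurProperty_ellOne α 𝕜).isCompact_preimage_toWeakSpace)
    (isSigmaLocallyFinite_ellOneSubbase g)
    (isInducing_toWeakSpace_generateFrom_ellOneSubbase hg)

end PeakSets

theorem ellOne_weakAleph_iff_card_le_continuum_general (𝕜 Γ : Type*) [RCLike 𝕜] :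
    IsAlephSpace (WeakSpace 𝕜 (lp (fun _ : Γ => 𝕜) 1)) ↔
      Cardinal.mk Γ ≤ Cardinal.continuum := by
  constructor
  · intro h
    classical
    have h_inj : Function.Injective fun a : Γ ↦ lp.single (E := fun _ ↦ 𝕜) 1 a (1 : 𝕜) := by
      intro a b hab
      by_contra hne
      simpa [hne] using congrArg (fun x : lp (fun _ : Γ ↦ 𝕜) 1 ↦ x a) hab
    exact Cardinal.lift_le_continuum.1 <| (Cardinal.lift_mk_le_lift_mk_of_injective h_inj).trans <|
      Cardinal.lift_le_continuum.2 <| mk_le_continuum_of_isGδ_zero_weakSpace 𝕜 _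
        (mk_rclike_le_continuum 𝕜) (h.isGδ_singleton 0)
  · intro h
    have h_lift : Cardinal.lift.{0} (Cardinal.mk Γ) ≤ Cardinal.lift (Cardinal.mk ℝ) := by
      simpa [Cardinal.mk_real] using h
    obtain ⟨g⟩ := Cardinal.lift_mk_le'.1 h_lift
    exact isAlephSpace_weakSpace_ellOne g.injective

/-- The Banach space `ℓ₁(Γ)` with its weak topology is an ℵ-space iff `|Γ| ≤ 𝔠`. -/
theorem ellOne_weakAleph_iff_card_le_continuum (Γ : Type) :
    IsAlephSpace (WeakSpace ℝ (lp (fun _ : Γ => ℝ) 1)) ↔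
      Cardinal.mk Γ ≤ Cardinal.continuum :=
  ellOne_weakAleph_iff_card_le_continuum_general ℝ Γ
end

section
/- The Banach space ℓ₁(ℝ) (i.e., ℓ₁(Γ) with index set Γ = ℝ) endowed with its weak topology σ(E,E′) is not a normal topological space. -/
open TopologicalSpace Filter Set

open scoped Topology

/-!
Over a Hamel basis of the space of functionals, indexed by `ι`, a weak topology becomes that of a
subspace of `𝕜 ^ ι` whose points take arbitrary values on any finite set of coordinates. As in
products of separable metric spaces, disjoint open sets are then told apart by countably many
coordinates. In particular, for a family indexed by an uncountable linear order with countable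
initial segments, the sums `x i + y j` with `i < j` and those with `j < i` have no disjoint weak
neighbourhoods: modulo countably many functionals the family lives in a second countable space, in
which some `x i` is a limit of the `x i'` with `i' > j` for some `j > i`. In `ℓ₁(Γ)` the two sets of
sums `e_a + 2 e_b` are nevertheless weakly closed: the functional summing all coordinates outside a
finite set `s` is of modulus at least `1` on every such sum with `a ∉ s` or `b ∉ s`, while at a
given point it tends to `0` as `s` grows.
-/

theorem exists_countable_forall_finset_subset {ι : Type*} (H : Finset ι → Set ι)
    (hH : ∀ F, (H F).Countable) :
    ∃ J : Set ι, J.Countable ∧ ∀ F : Finset ι, ↑F ⊆ J → H F ⊆ J := by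
  let step : Set ι → Set ι := fun J => J ∪ ⋃ F ∈ {F : Finset ι | ↑F ⊆ J}, H F
  let stage : ℕ → Set ι := fun n => step^[n] ∅
  have stage_succ (n : ℕ) : stage (n + 1) = step (stage n) := Function.iterate_succ_apply' ..
  have stage_mono : Monotone stage := monotone_nat_of_le_succ fun n => by
    rw [stage_succ]; exact subset_union_left
  have stage_countable (n : ℕ) : (stage n).Countable := by
    induction n with
    | zero => exact countable_empty
    | succ n ih =>
      rw [stage_succ]
      have finsets_countable : {F : Finset ι | ↑F ⊆ stage n}.Countable :=
        ((countable_ofPred_finite_subset ih).preimage Finset.coe_injective).mono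
          fun F hF => And.intro F.finite_toSet hF
      exact ih.union (finsets_countable.biUnion fun F _ => hH F)
  refine ⟨⋃ n, stage n, countable_iUnion stage_countable, fun F hF => ?_⟩
  obtain ⟨n, hn⟩ := stage_mono.directed_le.exists_mem_subset_of_finset_subset_biUnion hF
  calc H F ⊆ step (stage n) := subset_union_of_subset_right (subset_biUnion_of_mem (u := H) hn) _
    _ = stage (n + 1) := (stage_succ n).symm
    _ ⊆ ⋃ n, stage n := subset_iUnion stage (n + 1)

theorem exists_countable_subset_image_subset_closure {X Y : Type*} [TopologicalSpace Y]
    [SecondCountableTopology Y] (f : X → Y) (U : Set X) :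
    ∃ Q ⊆ U, Q.Countable ∧ f '' U ⊆ closure (f '' Q) := by
  obtain ⟨D, hDc, hD⟩ := exists_countable_dense (f '' U)
  have hDU : SurjOn f U ((↑) '' D) := Subtype.coe_image_subset _ _
  obtain ⟨Q, hQU, hQinj, hQD⟩ := hDU.exists_subset_injOn_image_eq
  refine ⟨Q, hQU, countable_of_injective_of_countable_image hQinj ?_, ?_⟩
  · rw [hQD]; exact hDc.image _
  · rw [hQD]; exact Subtype.dense_iff.1 hD

section Product

variable {X ι : Type*} {Y : ι → Type*} [TopologicalSpace X] [∀ i, TopologicalSpace (Y i)]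
  {φ : X → ∀ i, Y i}

theorem exists_finset_forall_mem_of_isInducing (hφ : Topology.IsInducing φ) {W : Set X}
    (hW : IsOpen W) {p : X} (hp : p ∈ W) :
    ∃ (I : Finset ι) (u : ∀ i, Set (Y i)),
      (∀ i ∈ I, u i ∈ 𝓝 (φ p i)) ∧ ∀ x, (∀ i ∈ I, φ x i ∈ u i) → x ∈ W := by
  obtain ⟨O, hO, rfl⟩ := hφ.isOpen_iff.1 hW
  obtain ⟨I, u, hu, huO⟩ := isOpen_pi_iff.1 hO (φ p) hp
  exact ⟨I, u, fun i hi => (hu i hi).1.mem_nhds (hu i hi).2, fun x hx => huO hx⟩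

theorem exists_finset_forall_eq_of_isInducing (hφ : Topology.IsInducing φ) {W : Set X}
    (hW : IsOpen W) {p : X} (hp : p ∈ W) :
    ∃ G : Finset ι, ∀ x, (∀ i ∈ G, φ x i = φ p i) → x ∈ W := by
  obtain ⟨G, u, hu, huW⟩ := exists_finset_forall_mem_of_isInducing hφ hW hp
  exact ⟨G, fun x hx => huW x fun i hi => hx i hi ▸ mem_of_mem_nhds (hu i hi)⟩

theorem exists_countable_disjoint_closure_image [∀ i, SecondCountableTopology (Y i)]
    (hφ : Topology.IsInducing φ)
    (hinterp : ∀ (s : Finset ι) (v : ∀ i, Y i), ∃ x, ∀ i ∈ s, φ x i = v i)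
    {U V : Set X} (hU : IsOpen U) (hV : IsOpen V) (hUV : Disjoint U V) :
    ∃ J : Set ι, J.Countable ∧
      Disjoint (closure ((fun x (j : J) => φ x j) '' U)) ((fun x (j : J) => φ x j) '' V) := by
  classical
  choose! G hG using fun p (hp : p ∈ U) => exists_finset_forall_eq_of_isInducing hφ hU hp
  choose Q hQU hQc hQ using fun F : Finset ι =>
    exists_countable_subset_image_subset_closure (fun x (i : F) => φ x i) U
  obtain ⟨J, hJ, hGJ⟩ := exists_countable_forall_finset_subset
    (fun F => ⋃ p ∈ Q F, (G p : Set ι)) fun F => (hQc F).biUnion fun p _ => (G p).countable_toSet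
  refine ⟨J, hJ, disjoint_right.2 ?_⟩
  rintro _ ⟨b, hbV, rfl⟩ hb
  obtain ⟨I, u, hu, huV⟩ := exists_finset_forall_mem_of_isInducing hφ hV hbV
  let F : Finset ι := I.filter (· ∈ J)
  have hFJ (i : F) : (i : ι) ∈ J := (Finset.mem_filter.1 i.2).2
  have hbF : (fun i : F => φ b i) ∈ closure ((fun x (i : F) => φ x i) '' Q F) := by
    refine closure_minimal (hQ F) isClosed_closure ?_
    refine map_mem_closure (f := fun y (i : F) => y ⟨i, hFJ i⟩) (by fun_prop) hb ?_
    rintro _ ⟨a, ha, rfl⟩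
    exact ⟨a, ha, rfl⟩
  obtain ⟨_, hpu, p, hpQ, rfl⟩ := mem_closure_iff_nhds.1 hbF _
    (set_pi_mem_nhds finite_univ fun i _ => hu i (Finset.mem_of_mem_filter _ i.2))
  have hpJ : ↑(G p) ⊆ J :=
    (subset_biUnion_of_mem (u := fun p => (G p : Set ι)) hpQ).trans (hGJ F fun i hi => hFJ ⟨i, hi⟩)
  -- The point agreeing with `p` on `J` and with `b` off `J` lies in both open sets.
  obtain ⟨x, hx⟩ := hinterp (I ∪ G p) (J.piecewise (φ p) (φ b))
  refine disjoint_left.1 hUV (hG p (hQU F hpQ) x fun i hi => ?_) (huV x fun i hi => ?_)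
  · rw [hx i (Finset.mem_union_right _ hi), piecewise_eq_of_mem _ _ _ (hpJ hi)]
  · rw [hx i (Finset.mem_union_left _ hi)]
    by_cases hiJ : i ∈ J
    · rw [piecewise_eq_of_mem _ _ _ hiJ]
      exact hpu ⟨i, Finset.mem_filter.2 ⟨hi, hiJ⟩⟩ trivial
    · rw [piecewise_eq_of_notMem _ _ _ hiJ]
      exact mem_of_mem_nhds (hu i hi)

end Product

section Order

open Cardinal

universe u

theorem exists_embedding_countable_Iic (Γ : Type u) [Uncountable Γ] :
    ∃ (T : Type u) (_ : LinearOrder T), Uncountable T ∧ (∀ t : T, (Iic t).Countable) ∧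
      Nonempty (T ↪ Γ) := by
  refine ⟨(ℵ₁ : Cardinal.{u}).ord.ToType, inferInstance, ?_, fun t => ?_, ?_⟩
  · rw [← aleph0_lt_mk_iff, mk_toType, card_ord]
    exact aleph0_lt_aleph_one
  · rw [← le_aleph0_iff_set_countable, ← Order.lt_succ_iff, succ_aleph0]
    simpa using mk_Iic_lt t (by simp) (by simp)
  · rw [← Cardinal.le_def, mk_toType, card_ord, aleph_one_le_iff]
    exact aleph0_lt_mk

theorem exists_lt_mem_closure_image_Ioi {T Y : Type*} [LinearOrder T] [Uncountable T]
    (hT : ∀ t : T, (Iic t).Countable) [TopologicalSpace Y] [HereditarilyLindelofSpace Y]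
    (ψ : T → Y) : ∃ s t, s < t ∧ ψ s ∈ closure (ψ '' Ioi t) := by
  by_contra! hψ
  obtain ⟨C, hC, hCψ⟩ :=
    eq_closed_inter_countable (fun t => closure (ψ '' Ioi t)) fun _ => isClosed_closure
  have hcover (s : T) : ∃ c ∈ C, s ≤ c := by
    obtain ⟨t, hst⟩ : ∃ t, s < t := by
      by_contra! hs
      exact not_countable_univ ((hT s).mono fun t _ => hs t)
    have hs : ψ s ∉ ⋂ c ∈ C, closure (ψ '' Ioi c) :=
      fun h => hψ s t hst (mem_iInter.1 (hCψ ▸ h) t)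
    simp only [mem_iInter, not_forall] at hs
    obtain ⟨c, hc, hsc⟩ := hs
    exact ⟨c, hc, not_lt.1 fun hcs => hsc (subset_closure (mem_image_of_mem ψ hcs))⟩
  refine not_countable_univ ((hC.biUnion fun t _ => hT t).mono fun s _ => ?_)
  simpa only [mem_iUnion₂, exists_prop, mem_Iic] using hcover s

end Order

section Weak

variable {ι 𝕜 E F : Type*} [Field 𝕜] [AddCommGroup E] [Module 𝕜 E] [AddCommGroup F] [Module 𝕜 F]
  {B : E →ₗ[𝕜] F →ₗ[𝕜] 𝕜}

theorem exists_forall_mem_apply_eq (hB : Function.Injective B.flip) {f : ι → F}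
    (hf : LinearIndependent 𝕜 f) (s : Finset ι) (v : ι → 𝕜) : ∃ x, ∀ i ∈ s, B x (f i) = v i := by
  have hfs : LinearIndependent 𝕜 fun (i : s) (x : E) => B x (f i) :=
    (hf.comp _ Subtype.val_injective).map' (LinearMap.ltoFun 𝕜 E 𝕜 𝕜 ∘ₗ B.flip)
      (LinearMap.ker_eq_bot.2 (DFunLike.coe_injective.comp hB))
  let L : E →ₗ[𝕜] s → 𝕜 := LinearMap.pi fun i => B.flip (f i)
  have hL : LinearMap.range L = ⊤ := by
    rw [← span_flip_eq_top_iff_linearIndependent.2 hfs, ← Submodule.span_eq (LinearMap.range L)]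
    rfl
  obtain ⟨x, hx⟩ := LinearMap.range_eq_top.1 hL fun i => v i
  exact ⟨x, fun i hi => congrFun hx ⟨i, hi⟩⟩

variable [TopologicalSpace 𝕜] [TopologicalSpace E] [B.IsWeak]

theorem isInducing_apply_basis [IsTopologicalSemiring 𝕜] (b : Module.Basis ι 𝕜 F) :
    Topology.IsInducing fun (x : E) (i : ι) => B x (b i) := by
  let extend : (ι → 𝕜) → F → 𝕜 := fun y f => ∑ i ∈ (b.repr f).support, b.repr f i * y i
  have hextend : (fun x f => B x f) = extend ∘ fun x i => B x (b i) := by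
    ext x f
    conv_lhs => rw [← b.linearCombination_repr f, Finsupp.linearCombination_apply, Finsupp.sum]
    simp [extend]
  have hB : Topology.IsInducing fun (x : E) (f : F) => B x f := LinearMap.IsWeak.isInducing B
  rw [hextend] at hB
  exact .of_comp (continuous_pi fun i => LinearMap.IsWeak.continuous_eval B (b i)) (by fun_prop) hB

theorem exists_countable_disjoint_closure_image_of_isWeak [IsTopologicalSemiring 𝕜]
    [SecondCountableTopology 𝕜] (hB : Function.Injective B.flip)
    {U V : Set E} (hU : IsOpen U) (hV : IsOpen V) (hUV : Disjoint U V) :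
    ∃ J : Set F, J.Countable ∧
      Disjoint (closure ((fun x (f : J) => B x f) '' U)) ((fun x (f : J) => B x f) '' V) := by
  let b := Module.Basis.ofVectorSpace 𝕜 F
  obtain ⟨J, hJ, hdisj⟩ := exists_countable_disjoint_closure_image (isInducing_apply_basis b)
    (exists_forall_mem_apply_eq hB b.linearIndependent) hU hV hUV
  refine ⟨b '' J, hJ.image b, disjoint_right.2 ?_⟩
  rintro _ ⟨y, hy, rfl⟩ hcl
  refine disjoint_right.1 hdisj (mem_image_of_mem _ hy) ?_
  refine map_mem_closure (f := fun z (j : J) => z ⟨b j, mem_image_of_mem b j.2⟩)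
    (by fun_prop) hcl ?_
  rintro _ ⟨x, hx, rfl⟩
  exact ⟨x, hx, rfl⟩

theorem not_separatedNhds_image_add [IsTopologicalSemiring 𝕜] [SecondCountableTopology 𝕜]
    (hB : Function.Injective B.flip) {T : Type*} [LinearOrder T] [Uncountable T]
    (hT : ∀ t : T, (Iic t).Countable) (x y : T → E) :
    ¬ SeparatedNhds ((fun p : T × T => x p.1 + y p.2) '' {p | p.1 < p.2})
      ((fun p : T × T => x p.1 + y p.2) '' {p | p.2 < p.1}) := by
  rintro ⟨U, V, hU, hV, hxU, hxV, hUV⟩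
  obtain ⟨J, hJ, hdisj⟩ := exists_countable_disjoint_closure_image_of_isWeak hB hV hU hUV.symm
  have : Countable J := hJ.to_subtype
  let ev : E → J → 𝕜 := fun z f => B z f
  have ev_add (z w : E) : ev (z + w) = ev z + ev w := by ext f; simp [ev]
  obtain ⟨s, t, hst, hs⟩ := exists_lt_mem_closure_image_Ioi hT (ev ∘ x)
  refine disjoint_right.1 hdisj (mem_image_of_mem ev (hxU ⟨(s, t), hst, rfl⟩)) ?_
  rw [ev_add]
  refine map_mem_closure (f := (· + ev (y t))) (by fun_prop) hs ?_
  rintro _ ⟨s', hs', rfl⟩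
  exact ⟨x s' + y t, hxV ⟨(s', t), hs', rfl⟩, ev_add _ _⟩

end Weak

section WeakSpace

variable (𝕜 E : Type*) [CommSemiring 𝕜] [TopologicalSpace 𝕜] [ContinuousAdd 𝕜]
  [ContinuousConstSMul 𝕜 𝕜] [AddCommMonoid E] [Module 𝕜 E] [TopologicalSpace E]

/-- The evaluation pairing of a space carrying its weak topology with its dual. Its left argument
lives in `WeakSpace 𝕜 E`, so that the topology there is the one induced by the pairing. -/
noncomputable def weakSpacePairing : WeakSpace 𝕜 E →ₗ[𝕜] StrongDual 𝕜 E →ₗ[𝕜] 𝕜 :=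
  (topDualPairing 𝕜 E).flip ∘ₗ (toWeakSpace 𝕜 E).symm.toLinearMap

instance : (weakSpacePairing 𝕜 E).IsWeak := ⟨rfl⟩

theorem weakSpacePairing_flip_injective : Function.Injective (weakSpacePairing 𝕜 E).flip :=
  fun _ _ h => ContinuousLinearMap.ext fun x => LinearMap.congr_fun h (toWeakSpace 𝕜 E x)

end WeakSpace

section EllOne

variable {Γ 𝕜 : Type*} [RCLike 𝕜]

variable (𝕜) in
/-- The functional on `ℓ₁(Γ)` summing all the coordinates outside the finite set `s`. -/
noncomputable def tailSumCLM (s : Finset Γ) : StrongDual 𝕜 (lp (fun _ : Γ => 𝕜) 1) :=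
  lp.tsumCLM 𝕜 Γ 𝕜 - ∑ γ ∈ s, lp.evalCLM 𝕜 (fun _ : Γ => 𝕜) 1 γ

theorem tailSumCLM_apply (s : Finset Γ) (x : lp (fun _ : Γ => 𝕜) 1) :
    tailSumCLM 𝕜 s x = ∑' γ, x γ - ∑ γ ∈ s, x γ := by
  simp only [tailSumCLM, sub_apply, sum_apply, lp.tsumCLM_apply]
  rfl

theorem tendsto_tailSumCLM (x : lp (fun _ : Γ => 𝕜) 1) :
    Tendsto (fun s => tailSumCLM 𝕜 s x) atTop (𝓝 0) := by
  have hx : Summable fun γ => x γ := .of_norm (by simpa using (lp.memℓp x).summable)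
  simpa only [tailSumCLM_apply, sub_self] using! hx.hasSum.const_sub (∑' γ, x γ)

variable [DecidableEq Γ]

theorem tailSumCLM_single (s : Finset Γ) (γ : Γ) (c : 𝕜) :
    tailSumCLM 𝕜 s (lp.single 1 γ c) = if γ ∈ s then 0 else c := by
  rw [tailSumCLM_apply]
  simp only [lp.single_apply, Pi.single_apply, Finset.sum_ite_eq']
  split_ifs <;> simp

variable (𝕜) in
/-- The vector `e_a + 2 e_b` of `ℓ₁(Γ)`. The unequal coefficients make it determine the ordered pair
`(a, b)`. It is placed in the weak space, where these vectors form a closed discrete set. -/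
noncomputable def twoPoint (p : Γ × Γ) : WeakSpace 𝕜 (lp (fun _ : Γ => 𝕜) 1) :=
  toWeakSpace 𝕜 _ (lp.single 1 p.1 1) + toWeakSpace 𝕜 _ (lp.single 1 p.2 2)

theorem twoPoint_apply (p : Γ × Γ) (γ : Γ) :
    (toWeakSpace 𝕜 _).symm (twoPoint 𝕜 p) γ =
      (((if γ = p.1 then 1 else 0) + (if γ = p.2 then 2 else 0) : ℕ) : 𝕜) := by
  push_cast
  rw [← Pi.single_apply, ← Pi.single_apply]
  rfl

theorem twoPoint_injective : Function.Injective (twoPoint 𝕜 : Γ × Γ → _) := by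
  rintro ⟨a, b⟩ ⟨c, d⟩ h
  have hcoord (γ : Γ) : (if γ = a then 1 else 0) + (if γ = b then 2 else 0) =
      (if γ = c then 1 else 0) + (if γ = d then 2 else 0) := by
    rw [← Nat.cast_inj (R := 𝕜), ← twoPoint_apply (a, b), ← twoPoint_apply (c, d), h]
  have ha := hcoord a
  have hb := hcoord b
  grind

theorem one_le_norm_tailSumCLM_twoPoint {s : Finset Γ} {p : Γ × Γ} (h : p ∉ s ×ˢ s) :
    1 ≤ ‖weakSpacePairing 𝕜 _ (twoPoint 𝕜 p) (tailSumCLM 𝕜 s)‖ := by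
  have hsum : weakSpacePairing 𝕜 _ (twoPoint 𝕜 p) (tailSumCLM 𝕜 s) =
      (((if p.1 ∈ s then 0 else 1) + (if p.2 ∈ s then 0 else 2) : ℕ) : 𝕜) := by
    push_cast
    rw [← tailSumCLM_single, ← tailSumCLM_single, ← map_add]
    rfl
  rw [Finset.mem_product] at h
  rw [hsum, RCLike.norm_natCast, Nat.one_le_cast]
  grind

theorem locallyFinite_twoPoint :
    LocallyFinite fun p : Γ × Γ => ({twoPoint 𝕜 p} : Set (WeakSpace 𝕜 _)) := by
  intro x
  obtain ⟨s, hs⟩ := ((tendsto_tailSumCLM ((toWeakSpace 𝕜 _).symm x)).norm.eventually_lt_const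
    (norm_zero (E := 𝕜) ▸ one_pos)).exists
  have hcont : Continuous fun y => ‖weakSpacePairing 𝕜 _ y (tailSumCLM 𝕜 s)‖ :=
    (LinearMap.IsWeak.continuous_eval _ _).norm
  refine ⟨_, hcont.isOpen_preimage _ isOpen_Iio |>.mem_nhds hs, (s ×ˢ s).finite_toSet.subset ?_⟩
  rintro p ⟨_, rfl, hlt⟩
  by_contra hp
  exact (one_le_norm_tailSumCLM_twoPoint hp).not_gt hlt

theorem isClosed_image_twoPoint (S : Set (Γ × Γ)) : IsClosed (twoPoint 𝕜 '' S) := by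
  rw [← biUnion_of_singleton (_ '' S), biUnion_image, biUnion_eq_iUnion]
  exact (locallyFinite_twoPoint.comp_injective Subtype.val_injective).isClosed_iUnion
    fun _ => isClosed_singleton

end EllOne

theorem ellOne_real_weak_not_normal_general (𝕜 Γ : Type*) [RCLike 𝕜] [Uncountable Γ] :
    ¬ NormalSpace (WeakSpace 𝕜 (lp (fun _ : Γ => 𝕜) 1)) := by
  classical
  intro hnormal
  obtain ⟨T, _, _, hT, ⟨e⟩⟩ := exists_embedding_countable_Iic Γ
  let pt : T × T → WeakSpace 𝕜 (lp (fun _ : Γ => 𝕜) 1) := twoPoint 𝕜 ∘ Prod.map e e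
  have pt_injective : Function.Injective pt :=
    twoPoint_injective.comp (e.injective.prodMap e.injective)
  have isClosed_image_pt (S : Set (T × T)) : IsClosed (pt '' S) := by
    rw [image_comp]
    exact isClosed_image_twoPoint _
  have disjoint_lt_gt : Disjoint {p : T × T | p.1 < p.2} {p | p.2 < p.1} :=
    disjoint_left.2 fun _ => lt_asymm
  exact not_separatedNhds_image_add (weakSpacePairing_flip_injective 𝕜 _) hT
    (fun t => toWeakSpace 𝕜 _ (lp.single 1 (e t) 1))
    (fun t => toWeakSpace 𝕜 _ (lp.single 1 (e t) 2))
    (normal_separation (isClosed_image_pt _) (isClosed_image_pt _)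
      ((disjoint_image_iff pt_injective).2 disjoint_lt_gt))

/-- The Banach space `ℓ₁(ℝ)` endowed with its weak topology is not normal. -/
theorem ellOne_real_weak_not_normal :
    ¬ NormalSpace (WeakSpace ℝ (lp (fun _ : ℝ => ℝ) 1)) :=
  ellOne_real_weak_not_normal_general ℝ ℝ
end

section
/- Let X be a locally compact Hausdorff space and let C₀(X) be the Banach space of continuous real-valued functions on X vanishing at infinity, with the supremum norm. Then C₀(X) endowed with its weak topology σ(E,E′) is an ℵ-space if and only if X is countable. -/
open TopologicalSpace Filter Set

/-!
A weakly compact subset of `C₀(X)` is norm bounded, and on norm bounded sets a pointwise convergent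
sequence converges weakly: extend the functions to the one-point compactification, bound each
functional by an integral against a finite measure, and use dominated convergence. If `X` is
countable, balls therefore carry the metrizable topology of pointwise convergence, and countable
bases of the balls of integer radius together form a countable k-network.

Conversely, a σ-locally finite k-network gives a countable cs-network `N` at `0`, which is used
twice. First, if `h : X → Z` maps to a second-countable metrizable space and has a limit at
infinity, then `range h` is countable: for each value `h p` other than the limit, bumps whose
supports shrink to `h p` without containing it pull back to a weakly null sequence, and a member of
`N` absorbing its tail, together with a basic neighbourhood of `h p`, determines `h p`.
Second, by countable tightness of spaces of continuous functions on a compact space and the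
countability of ranges, every neighbourhood of `0` contains a member of `N` which contains all `f`
in the unit ball that are small on some finite set. For `{f | f p < 1}` such a member determines
`p` up to finitely many choices, so `X` is countable.
-/

open scoped Topology ZeroAtInfty NNReal ENNReal Pointwise
open MeasureTheory

section Modulus

variable {E : Type*} [AddCommGroup E] [Lattice E]

theorem Icc_neg_self_add [IsOrderedAddMonoid E] {f g : E} (hf : 0 ≤ f) (hg : 0 ≤ g) :
    Icc (-(f + g)) (f + g) = Icc (-f) f + Icc (-g) g := by
  refine Subset.antisymm (fun z hz => ?_) ?_
  · refine ⟨-f ⊔ z ⊓ f, ⟨le_sup_left, sup_le (neg_le_self hf) inf_le_right⟩,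
      z - (-f ⊔ z ⊓ f), ⟨?_, ?_⟩, add_sub_cancel _ _⟩
    · rw [neg_le_sub_iff_le_add]
      refine sup_le ?_ (inf_le_left.trans (le_add_of_nonneg_right hg))
      simpa [neg_add, add_comm] using add_le_add_left hz.1 g
    · rw [sub_le_iff_le_add, ← sub_le_iff_le_add']
      exact (le_inf (sub_le_self z hg) (sub_le_iff_le_add.2 hz.2)).trans le_sup_right
  · rw [neg_add]
    exact Icc_add_Icc_subset ..

variable [Module ℝ E]

/-- The modulus of an order bounded linear functional `φ` at a nonnegative vector `f`, given by the
Riesz–Kantorovich formula; it is a junk value when `φ` is unbounded on `[-f, f]`. -/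
noncomputable def modulus (φ : E →ₗ[ℝ] ℝ) (f : E) : ℝ :=
  sSup (φ '' Icc (-f) f)

variable {φ : E →ₗ[ℝ] ℝ}

theorem modulus_smul [PosSMulMono ℝ E] {c : ℝ} (hc : 0 ≤ c) (f : E) :
    modulus φ (c • f) = c * modulus φ f := by
  obtain rfl | hc' := hc.eq_or_lt
  · simp [modulus]
  · have Icc_smul : Icc (-(c • f)) (c • f) = c • Icc (-f) f := by
      rw [← smul_neg]
      exact ((OrderIso.smulRight hc').image_Icc (-f) f).symm
    rw [modulus, Icc_smul, image_smul_comm _ _ _ (map_smul φ c), Real.sSup_smul_of_nonneg hc,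
      smul_eq_mul, modulus]

variable [IsOrderedAddMonoid E]

theorem modulus_add (hφ : ∀ f, BddAbove (φ '' Icc (-f) f)) {f g : E} (hf : 0 ≤ f) (hg : 0 ≤ g) :
    modulus φ (f + g) = modulus φ f + modulus φ g := by
  have image_nonempty {h : E} (hh : 0 ≤ h) : (φ '' Icc (-h) h).Nonempty :=
    (nonempty_Icc.2 (neg_le_self hh)).image φ
  simp only [modulus, Icc_neg_self_add hf hg, image_add]
  exact csSup_add (image_nonempty hf) (hφ f) (image_nonempty hg) (hφ g)

theorem abs_apply_le_modulus (hφ : ∀ f, BddAbove (φ '' Icc (-f) f)) (f : E) :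
    |φ f| ≤ modulus φ |f| :=
  abs_le'.2 ⟨le_csSup (hφ _) ⟨f, ⟨neg_le.1 (neg_le_abs f), le_abs_self f⟩, rfl⟩,
    le_csSup (hφ _) ⟨-f, ⟨neg_le_neg (le_abs_self f), neg_le_abs f⟩, map_neg φ f⟩⟩

theorem modulus_nonneg (hφ : ∀ f, BddAbove (φ '' Icc (-f) f)) {f : E} (hf : 0 ≤ f) :
    0 ≤ modulus φ f :=
  le_csSup (hφ f) ⟨0, ⟨neg_nonpos.2 hf, hf⟩, map_zero φ⟩

end Modulus

section Riesz

open CompactlySupported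

variable {K : Type*} [TopologicalSpace K]

theorem toReal_nonneg (f : C_c(K, ℝ≥0)) : (0 : C(K, ℝ)) ≤ f.toReal := fun x => by
  simp

variable [CompactSpace K]

theorem bddAbove_image_Icc_neg_self (φ : StrongDual ℝ C(K, ℝ)) (f : C(K, ℝ)) :
    BddAbove (φ.toLinearMap '' Icc (-f) f) := by
  refine ⟨‖φ‖ * ‖f‖, ?_⟩
  rintro _ ⟨g, hg, rfl⟩
  refine (le_abs_self _).trans (φ.le_opNorm_of_le ?_)
  refine (ContinuousMap.norm_le g (norm_nonneg f)).2 fun x => ?_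
  exact (abs_le.2 ⟨hg.1 x, hg.2 x⟩).trans ((le_abs_self _).trans (f.norm_coe_le_norm x))

/-- The restriction to `C(K, ℝ≥0)` of the modulus of a bounded functional `φ` on `C(K, ℝ)`, as an
`ℝ≥0`-linear map. Since `K` is compact, `C_c(K, ℝ≥0)`, the type of functions used by the
Riesz–Markov–Kakutani theorem, stands for `C(K, ℝ≥0)`. -/
noncomputable def nnrealModulus (φ : StrongDual ℝ C(K, ℝ)) : C_c(K, ℝ≥0) →ₗ[ℝ≥0] ℝ≥0 where
  toFun f := ⟨modulus φ.toLinearMap f.toReal,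
    modulus_nonneg (bddAbove_image_Icc_neg_self φ) (toReal_nonneg f)⟩
  map_add' f g := NNReal.eq <| by
    have toReal_add : ((f + g).toReal : C(K, ℝ)) = f.toReal + g.toReal := by ext; simp
    exact (congrArg _ toReal_add).trans
      (modulus_add (bddAbove_image_Icc_neg_self φ) (toReal_nonneg f) (toReal_nonneg g))
  map_smul' c f := NNReal.eq <| by
    have toReal_smul : ((c • f).toReal : C(K, ℝ)) = (c : ℝ) • (f.toReal : C(K, ℝ)) := by
      ext; simp [NNReal.smul_def]
    exact (congrArg _ toReal_smul).trans (modulus_smul c.2 _)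

theorem exists_measure_enorm_apply_le [T2Space K] [MeasurableSpace K] [BorelSpace K]
    (φ : StrongDual ℝ C(K, ℝ)) :
    ∃ μ : Measure K, IsFiniteMeasure μ ∧ ∀ f, ‖φ f‖ₑ ≤ ∫⁻ x, ‖f x‖ₑ ∂μ := by
  refine ⟨NNRealRMK.rieszMeasure (nnrealModulus φ), inferInstance, fun f => ?_⟩
  let absf : C_c(K, ℝ≥0) := CompactlySupportedContinuousMap.continuousMapEquiv
    ⟨fun x => ‖f x‖₊, by fun_prop⟩
  have absf_toReal : (absf.toReal : C(K, ℝ)) = |f| := by ext; simp [absf]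
  have apply_le : ‖φ f‖ ≤ modulus φ.toLinearMap absf.toReal :=
    absf_toReal ▸ abs_apply_le_modulus (bddAbove_image_Icc_neg_self φ) f
  calc ‖φ f‖ₑ ≤ nnrealModulus φ absf := ENNReal.coe_le_coe.2 apply_le
    _ = ∫⁻ x, absf x ∂NNRealRMK.rieszMeasure (nnrealModulus φ) :=
        (NNRealRMK.lintegral_rieszMeasure ..).symm

end Riesz

section WeakConvergence

variable {ι : Type*} {l : Filter ι}

theorem tendsto_toWeakSpace_iff {E : Type*} [NormedAddCommGroup E] [NormedSpace ℝ E] {F : ι → E}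
    {f : E} :
    Tendsto (fun i => toWeakSpace ℝ E (F i)) l (𝓝 (toWeakSpace ℝ E f)) ↔
      ∀ φ : StrongDual ℝ E, Tendsto (fun i => φ (F i)) l (𝓝 (φ f)) := by
  refine WeakBilin.tendsto_iff_forall_eval_tendsto _ fun x y hxy => ?_
  by_contra hne
  obtain ⟨φ, hφ⟩ := SeparatingDual.exists_separating_of_ne (R := ℝ) hne
  exact hφ (DFunLike.congr_fun hxy φ)

theorem tendsto_apply_of_tendsto_coe_of_norm_le {K : Type*} [TopologicalSpace K] [CompactSpace K]
    [T2Space K] [l.IsCountablyGenerated] {F : ι → C(K, ℝ)} {f : C(K, ℝ)} {C : ℝ}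
    (hF : ∀ᶠ i in l, ‖F i‖ ≤ C) (hFf : Tendsto (fun i => ⇑(F i)) l (𝓝 ⇑f))
    (φ : StrongDual ℝ C(K, ℝ)) : Tendsto (fun i => φ (F i)) l (𝓝 (φ f)) := by
  borelize K
  obtain ⟨μ, _, hμ⟩ := exists_measure_enorm_apply_le φ
  have lintegral_tendsto : Tendsto (fun i => ∫⁻ x, ‖(F i - f) x‖ₑ ∂μ) l (𝓝 0) := by
    rw [← lintegral_zero (μ := μ)]
    refine tendsto_lintegral_filter_of_dominated_convergence (fun _ => ENNReal.ofReal (C + ‖f‖))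
      (.of_forall fun i => (F i - f).continuous.measurable.enorm) ?_
      (by simp [ENNReal.mul_eq_top]) ?_
    · filter_upwards [hF] with i hi
      refine .of_forall fun x => ?_
      rw [← ofReal_norm]
      exact ENNReal.ofReal_le_ofReal (((F i - f).norm_coe_le_norm x).trans
        ((norm_sub_le _ _).trans (by gcongr)))
    · refine .of_forall fun x => ?_
      have := (tendsto_pi_nhds.1 hFf x).sub_const (f x)
      simpa using this.enorm
  rw [tendsto_iff_edist_tendsto_0]
  refine tendsto_of_tendsto_of_tendsto_of_le_of_le tendsto_const_nhds lintegral_tendsto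
    (fun _ => zero_le) fun i => ?_
  simpa only [edist_eq_enorm_sub, map_sub] using hμ (F i - f)

variable {X : Type*} [TopologicalSpace X]

theorem norm_coe_le_norm (f : C₀(X, ℝ)) (x : X) : ‖f x‖ ≤ ‖f‖ :=
  f.toBCF.norm_coe_le_norm x

variable [T2Space X]

theorem tendsto_coclosedCompact (f : C₀(X, ℝ)) : Tendsto f (coclosedCompact X) (𝓝 0) := by
  rw [coclosedCompact_eq_cocompact]
  exact zero_at_infty f

/-- The extension by `0` at infinity of functions in `C₀(X, ℝ)` to the one-point compactification
of `X`. -/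
noncomputable def extendOnePoint : C₀(X, ℝ) →ₗᵢ[ℝ] C(OnePoint X, ℝ) where
  toFun f := OnePoint.continuousMapMk f 0 (tendsto_coclosedCompact f)
  map_add' f g := by
    ext x
    cases x
    exacts [(add_zero 0).symm, rfl]
  map_smul' c f := by
    ext x
    cases x
    exacts [(mul_zero c).symm, rfl]
  norm_map' f := by
    refine le_antisymm ((ContinuousMap.norm_le _ (norm_nonneg f)).2 fun x => ?_) ?_
    · cases x
      exacts [norm_zero.trans_le (norm_nonneg f), norm_coe_le_norm f _]
    · refine (BoundedContinuousFunction.norm_le (norm_nonneg _)).2 fun x => ?_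
      exact ContinuousMap.norm_coe_le_norm
        (OnePoint.continuousMapMk (f : C(X, ℝ)) 0 (tendsto_coclosedCompact f)) (x : OnePoint X)

@[simp]
theorem extendOnePoint_coe (f : C₀(X, ℝ)) (x : X) : extendOnePoint f x = f x := rfl

@[simp]
theorem extendOnePoint_infty (f : C₀(X, ℝ)) : extendOnePoint f OnePoint.infty = 0 := rfl

theorem exists_strongDual_comp_linearIsometry {E F : Type*} [NormedAddCommGroup E]
    [NormedSpace ℝ E] [NormedAddCommGroup F] [NormedSpace ℝ F] (i : E →ₗᵢ[ℝ] F)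
    (φ : StrongDual ℝ E) : ∃ ψ : StrongDual ℝ F, ∀ f, ψ (i f) = φ f := by
  obtain ⟨ψ, hψ, -⟩ := exists_extension_norm_eq i.range
    (φ ∘L (i.equivRange.symm : i.range →L[ℝ] E))
  exact ⟨ψ, fun f => by simpa using hψ (i.equivRange f)⟩

theorem tendsto_toWeakSpace_of_tendsto_coe [LocallyCompactSpace X] [l.IsCountablyGenerated]
    {F : ι → C₀(X, ℝ)} {f : C₀(X, ℝ)} {C : ℝ} (hF : ∀ᶠ i in l, ‖F i‖ ≤ C)
    (hFf : Tendsto (fun i => ⇑(F i)) l (𝓝 ⇑f)) :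
    Tendsto (fun i => toWeakSpace ℝ C₀(X, ℝ) (F i)) l (𝓝 (toWeakSpace ℝ C₀(X, ℝ) f)) := by
  refine tendsto_toWeakSpace_iff.2 fun φ => ?_
  obtain ⟨ψ, hψ⟩ := exists_strongDual_comp_linearIsometry extendOnePoint φ
  simp only [← hψ]
  refine tendsto_apply_of_tendsto_coe_of_norm_le (by simpa using hF)
    (tendsto_pi_nhds.2 fun x => ?_) ψ
  cases x with
  | infty => simpa using tendsto_const_nhds
  | coe x => simpa using tendsto_pi_nhds.1 hFf x

end WeakConvergence

section CountableKNetwork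

variable {S : Type*} [TopologicalSpace S]

theorem IsAleph0Space.isAlephSpace (h : IsAleph0Space S) : IsAlephSpace S := by
  obtain ⟨regular, t2, N, hN, hkN⟩ := h
  refine ⟨regular, t2, N, ?_, hkN⟩
  obtain rfl | hne := N.eq_empty_or_nonempty
  · exact ⟨fun _ => ∅, fun _ _ => ⟨univ, univ_mem, by simp⟩, by simp⟩
  · obtain ⟨A, rfl⟩ := hN.exists_eq_range hne
    exact ⟨fun n => {A n},
      fun n _ => ⟨univ, univ_mem, (finite_singleton (A n)).subset fun _ h => h.1⟩,
      (iUnion_singleton_eq_range A).symm⟩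

theorem isKNetwork_of_isTopologicalBasis {b : Set (Set S)} (hb : IsTopologicalBasis b) :
    IsKNetwork b := by
  intro K U hK hU hKU
  obtain ⟨F, hF, hFfin, hKF⟩ := hK.elim_finite_subcover_image (b := {A ∈ b | A ⊆ U})
    (c := fun A => A) (fun A hA => hb.isOpen hA.1)
    (by rwa [← sUnion_eq_biUnion, ← hb.open_eq_sUnion' hU])
  exact ⟨F, fun A hA => (hF hA).1, hFfin, by rwa [sUnion_eq_biUnion],
    sUnion_subset fun A hA => (hF hA).2⟩

theorem isKNetwork_iUnion_image_coe {ι : Type*} {B : ι → Set S} {N : ∀ i, Set (Set (B i))}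
    (hN : ∀ i, IsKNetwork (N i)) (hB : ∀ K, IsCompact K → ∃ i, K ⊆ B i) :
    IsKNetwork (⋃ i, image ((↑) : B i → S) '' N i) := by
  intro K U hK hU hKU
  obtain ⟨i, hKB⟩ := hB K hK
  have hKi : IsCompact ((↑) ⁻¹' K : Set (B i)) := by
    rwa [Subtype.isCompact_iff, Subtype.image_preimage_coe, inter_eq_right.2 hKB]
  obtain ⟨F, hFN, hFfin, hKF, hFU⟩ :=
    hN i _ _ hKi (hU.preimage continuous_subtype_val) (preimage_mono hKU)
  refine ⟨image (↑) '' F, (image_mono hFN).trans (subset_iUnion_of_subset i subset_rfl),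
    hFfin.image _, ?_, ?_⟩ <;> rw [← image_sUnion]
  · exact fun x hx => ⟨⟨x, hKB hx⟩, hKF hx, rfl⟩
  · exact image_subset_iff.2 hFU

end CountableKNetwork

section CountableBase

theorem continuous_symm_toWeakSpace {E : Type*} [NormedAddCommGroup E] [NormedSpace ℝ E]
    (φ : StrongDual ℝ E) : Continuous fun f : WeakSpace ℝ E => φ ((toWeakSpace ℝ E).symm f) :=
  WeakBilin.eval_continuous _ φ

theorem exists_nat_norm_le_of_isCompact {E : Type*} [NormedAddCommGroup E] [NormedSpace ℝ E]
    {K : Set (WeakSpace ℝ E)} (hK : IsCompact K) :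
    ∃ n : ℕ, K ⊆ {f | ‖(toWeakSpace ℝ E).symm f‖ ≤ n} := by
  obtain ⟨C, hC⟩ := banach_steinhaus
    (g := fun f : K => NormedSpace.inclusionInDoubleDual ℝ E ((toWeakSpace ℝ E).symm f)) fun φ => by
      obtain ⟨C, hC⟩ := (hK.image (continuous_symm_toWeakSpace φ)).isBounded.exists_norm_le
      exact ⟨C, fun f => hC _ ⟨f, f.2, rfl⟩⟩
  obtain ⟨n, hn⟩ := exists_nat_ge C
  refine ⟨n, fun f hf => ?_⟩
  rw [mem_ofPred_eq, ← (NormedSpace.inclusionInDoubleDualLi (E := E) ℝ).norm_map]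
  exact (hC ⟨f, hf⟩).trans hn

variable {X : Type*} [TopologicalSpace X] [T2Space X]

theorem continuous_coe_symm_toWeakSpace :
    Continuous fun f : WeakSpace ℝ C₀(X, ℝ) => ⇑((toWeakSpace ℝ C₀(X, ℝ)).symm f) :=
  continuous_pi fun x => continuous_symm_toWeakSpace
    (ContinuousMap.evalCLM ℝ (x : OnePoint X) ∘L extendOnePoint.toContinuousLinearMap)

variable [LocallyCompactSpace X]

theorem isInducing_coe_symm_toWeakSpace [Countable X] (r : ℝ) :
    Topology.IsInducing
      fun f : {f : WeakSpace ℝ C₀(X, ℝ) | ‖(toWeakSpace ℝ C₀(X, ℝ)).symm f‖ ≤ r} =>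
        ⇑((toWeakSpace ℝ C₀(X, ℝ)).symm f) := by
  let e := toWeakSpace ℝ C₀(X, ℝ)
  let B : Set (WeakSpace ℝ C₀(X, ℝ)) := {f | ‖e.symm f‖ ≤ r}
  refine Topology.isInducing_iff_nhds.2 fun f => le_antisymm ?_ ?_
  · exact ((continuous_coe_symm_toWeakSpace.comp continuous_subtype_val).tendsto f).le_comap
  · rw [← tendsto_id', tendsto_subtype_rng]
    have norm_le : ∀ᶠ g in comap (fun g : B => ⇑(e.symm g)) (𝓝 ⇑(e.symm f)), ‖e.symm g.1‖ ≤ r :=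
      .of_forall Subtype.property
    simpa only [e, id, LinearEquiv.apply_symm_apply] using
      tendsto_toWeakSpace_of_tendsto_coe norm_le tendsto_comap

theorem isAleph0Space_weakSpace_of_countable [Countable X] :
    IsAleph0Space (WeakSpace ℝ C₀(X, ℝ)) := by
  let B (n : ℕ) : Set (WeakSpace ℝ C₀(X, ℝ)) := {f | ‖(toWeakSpace ℝ C₀(X, ℝ)).symm f‖ ≤ n}
  have (n : ℕ) : SecondCountableTopology (B n) :=
    (isInducing_coe_symm_toWeakSpace n).secondCountableTopology
  refine ⟨inferInstance, inferInstance, ⋃ n, image ((↑) : B n → _) '' countableBasis (B n),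
    countable_iUnion fun n => (countable_countableBasis _).image _, ?_⟩
  have hB (K) (hK : IsCompact K) : ∃ n, K ⊆ B n := exists_nat_norm_le_of_isCompact hK
  have hN (n : ℕ) : IsKNetwork (countableBasis (B n)) :=
    isKNetwork_of_isTopologicalBasis (isBasis_countableBasis _)
  exact isKNetwork_iUnion_image_coe hN hB

end CountableBase

section CsNetwork

variable {S : Type*} [TopologicalSpace S]

/-- A family `N` is a *cs-network at `a`* if every sequence converging to `a` is eventually in some
member of `N` contained in any prescribed neighbourhood of `a`. -/
def IsCsNetworkAt (N : Set (Set S)) (a : S) : Prop :=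
  ∀ g : ℕ → S, Tendsto g atTop (𝓝 a) → ∀ U ∈ 𝓝 a, ∃ A ∈ N, A ⊆ U ∧ ∀ᶠ n in atTop, g n ∈ A

variable {N : Set (Set S)}

theorem IsSigmaLocallyFinite.countable_mem_closure (hN : IsSigmaLocallyFinite N) (a : S) :
    {A ∈ N | a ∈ closure A}.Countable := by
  obtain ⟨N, hN, rfl⟩ := hN
  have sep_iUnion : {A ∈ ⋃ n, N n | a ∈ closure A} = ⋃ n, {A ∈ N n | a ∈ closure A} := by
    ext A
    simp
  rw [sep_iUnion]
  refine countable_iUnion fun n => ?_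
  obtain ⟨V, hV, hfin⟩ := hN n a
  exact (hfin.subset fun A hA =>
    ⟨hA.1, inter_comm V A ▸ mem_closure_iff_nhds.1 hA.2 V hV⟩).countable

theorem IsKNetwork.isCsNetworkAt (hN : IsKNetwork N) (a : S) :
    IsCsNetworkAt (sUnion '' {F | F.Finite ∧ F ⊆ {A ∈ N | a ∈ closure A}}) a := by
  intro g hg U hU
  obtain ⟨V, hVU, hV, haV⟩ := mem_nhds_iff.1 hU
  obtain ⟨k, hk⟩ := eventually_atTop.1 (hg.eventually (hV.mem_nhds haV))
  have compact_tail := ((tendsto_add_atTop_iff_nat k).2 hg).isCompact_insert_range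
  obtain ⟨F, hFN, hF, hKF, hFV⟩ := hN _ V compact_tail hV
    (insert_subset haV (range_subset_iff.2 fun n => hk _ (Nat.le_add_left k n)))
  refine ⟨_, ⟨{A ∈ F | a ∈ closure A}, ⟨hF.sep _, fun A hA => ⟨hFN hA.1, hA.2⟩⟩, rfl⟩,
    (sUnion_mono (sep_subset _ _)).trans (hFV.trans hVU), ?_⟩
  have avoid : ∀ᶠ x in 𝓝 a, ∀ A ∈ {A ∈ F | a ∉ closure A}, x ∉ A :=
    (eventually_all_finite (hF.sep _)).2 fun A hA =>
      mem_of_superset (isClosed_closure.isOpen_compl.mem_nhds hA.2)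
        (compl_subset_compl.2 subset_closure)
  filter_upwards [hg.eventually avoid, eventually_ge_atTop k] with n hn hkn
  obtain ⟨A, hA, hgA⟩ := hKF (mem_insert_of_mem _ ⟨n - k, congrArg g (Nat.sub_add_cancel hkn)⟩)
  exact ⟨A, ⟨hA, by_contra fun haA => hn A ⟨hA, haA⟩ hgA⟩, hgA⟩

theorem IsAlephSpace.exists_countable_isCsNetworkAt (hS : IsAlephSpace S) (a : S) :
    ∃ N : Set (Set S), N.Countable ∧ IsCsNetworkAt N a := by
  obtain ⟨-, -, N, hσ, hk⟩ := hS
  exact ⟨_, (countable_ofPred_finite_subset (hσ.countable_mem_closure a)).image _,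
    hk.isCsNetworkAt a⟩

end CsNetwork

section CountableRange

theorem exists_nat_abs_mul_sub_one_le {t : ℝ} (k : ℕ) (ht : 0 < t) (htk : t < 1 / (k + 2)) :
    ∃ n ≥ k, |n * t - 1| ≤ 1 / 2 := by
  have hk : (k : ℝ) + 2 < 1 / t := (lt_one_div ht (by positivity)).1 htk
  have t_le : t ≤ 1 / 2 :=
    htk.le.trans (one_div_le_one_div_of_le two_pos (le_add_of_nonneg_left k.cast_nonneg))
  refine ⟨⌈1 / t⌉₊, Nat.cast_le.1 ((by linarith : (k : ℝ) ≤ 1 / t).trans (Nat.le_ceil _)), ?_⟩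
  have lower : 1 ≤ ⌈1 / t⌉₊ * t := (div_le_iff₀ ht).1 (Nat.le_ceil _)
  have upper : ⌈1 / t⌉₊ * t ≤ 1 + t := calc
    _ ≤ (1 / t + 1) * t := by gcongr; exact (Nat.ceil_lt_add_one (by positivity)).le
    _ = 1 + t := by field_simp
  rw [abs_of_nonneg] <;> linarith

variable {Z : Type*} [TopologicalSpace Z] [MetrizableSpace Z] {a y : Z}

theorem exists_bumps (hay : a ≠ y) :
    ∃ u : ℕ → C(Z, ℝ), (∀ n, u n a = 0) ∧ (∀ n z, |u n z| ≤ 1) ∧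
      (∀ z, Tendsto (fun n => u n z) atTop (𝓝 0)) ∧
      ∀ k, ∀ᶠ z in 𝓝[≠] y, ∃ n ≥ k, 1 / 2 ≤ u n z := by
  let _ := metrizableSpaceMetric Z
  have hd : 0 < dist a y := dist_pos.2 hay
  -- The tents peak at `t = 1 / n`; the factor `2` keeps `t a = 2` outside all their supports.
  let t (z : Z) : ℝ := 2 * dist z y / dist a y
  have t_cont : Continuous t := by fun_prop
  refine ⟨fun n => ⟨fun z => max 0 (1 - |n * t z - 1|), by fun_prop⟩, fun n => ?_,
    fun n z => ?_, fun z => ?_, fun k => ?_⟩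
  · refine max_eq_left (sub_nonpos.2 ?_)
    rw [show t a = 2 from mul_div_cancel_right₀ 2 hd.ne']
    obtain rfl | hn := n.eq_zero_or_pos
    · simp
    · have : (1 : ℝ) ≤ n := Nat.one_le_cast.2 hn
      exact le_abs.2 (.inl (by linarith))
  · rw [ContinuousMap.coe_mk, abs_of_nonneg (le_max_left _ _)]
    exact max_le zero_le_one (sub_le_self _ (abs_nonneg _))
  · refine tendsto_const_nhds.congr' ?_
    obtain ht | ht := (show 0 ≤ t z by positivity).eq_or_lt
    · simp [← ht]
    · filter_upwards [(tendsto_natCast_atTop_atTop.atTop_mul_const ht).eventually_ge_atTop 2]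
        with n hn
      exact (max_eq_left (sub_nonpos.2 (le_abs.2 (.inl (by linarith))))).symm
  · have t_small : ∀ᶠ z in 𝓝[≠] y, t z < 1 / (k + 2) := by
      refine (t_cont.tendsto y).mono_left nhdsWithin_le_nhds |>.eventually_lt_const ?_
      simp only [t, dist_self, mul_zero, zero_div]
      positivity
    filter_upwards [t_small, self_mem_nhdsWithin] with z hz hzy
    have t_pos : 0 < t z := div_pos (mul_pos two_pos (dist_pos.2 hzy)) hd
    obtain ⟨n, hn, hle⟩ := exists_nat_abs_mul_sub_one_le k t_pos hz
    exact ⟨n, hn, le_max_of_le_right (by linarith)⟩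

variable {X : Type*} [TopologicalSpace X] [T2Space X] [LocallyCompactSpace X]

theorem exists_seq_tendsto_zero_half_le (h : C(X, Z)) (hh : Tendsto h (cocompact X) (𝓝 a))
    (hay : a ≠ y) :
    ∃ G : ℕ → C₀(X, ℝ), Tendsto (fun n => toWeakSpace ℝ _ (G n)) atTop (𝓝 0) ∧
      ∀ k, ∀ᶠ z in 𝓝[≠] y, ∀ x, h x = z → ∃ n ≥ k, 1 / 2 ≤ G n x := by
  obtain ⟨u, hua, hu1, hu0, huy⟩ := exists_bumps hay
  let G (n : ℕ) : C₀(X, ℝ) := ⟨(u n).comp h, hua n ▸ ((u n).continuous.tendsto a).comp hh⟩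
  refine ⟨G, ?_, fun k => (huy k).mono ?_⟩
  · rw [← map_zero (toWeakSpace ℝ C₀(X, ℝ))]
    refine tendsto_toWeakSpace_of_tendsto_coe (C := 1) (.of_forall fun n => ?_)
      (tendsto_pi_nhds.2 fun x => hu0 (h x))
    exact (BoundedContinuousFunction.norm_le zero_le_one).2 fun x => hu1 n (h x)
  · rintro _ ⟨n, hn, hle⟩ x rfl
    exact ⟨n, hn, hle⟩

variable {N : Set (Set (WeakSpace ℝ C₀(X, ℝ)))}

theorem IsCsNetworkAt.exists_isolating [SecondCountableTopology Z] (hN : IsCsNetworkAt N 0)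
    {h : C(X, Z)} (hh : Tendsto h (cocompact X) (𝓝 a)) {p : X} (hp : a ≠ h p) :
    ∃ A ∈ N, ∃ B ∈ countableBasis Z, h p ∈ B ∧
      (∀ f ∈ A, (toWeakSpace ℝ C₀(X, ℝ)).symm f p < 1 / 2) ∧
      ∀ x, h x ∈ B → h x ≠ h p → ∃ f ∈ A, 1 / 2 ≤ (toWeakSpace ℝ C₀(X, ℝ)).symm f x := by
  obtain ⟨G, hG, hGp⟩ := exists_seq_tendsto_zero_half_le h hh hp
  have lt_half : ∀ᶠ f : WeakSpace ℝ C₀(X, ℝ) in 𝓝 0,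
      (toWeakSpace ℝ C₀(X, ℝ)).symm f p < 1 / 2 :=
    ((continuous_apply p).comp continuous_coe_symm_toWeakSpace).tendsto 0
      |>.eventually_lt_const (by simp)
  obtain ⟨A, hA, hAU, hGA⟩ := hN _ hG _ lt_half
  obtain ⟨k, hk⟩ := eventually_atTop.1 hGA
  obtain ⟨B, hB, hpB, hBsub⟩ := (isBasis_countableBasis Z).mem_nhds_iff.1
    (eventually_nhdsWithin_iff.1 (hGp k))
  refine ⟨A, hA, B, hB, hpB, hAU, fun x hx hxp => ?_⟩
  obtain ⟨n, hn, hle⟩ := hBsub hx hxp x rfl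
  exact ⟨_, hk n hn, by simpa using hle⟩

theorem IsCsNetworkAt.countable_range [SecondCountableTopology Z] (hN : IsCsNetworkAt N 0)
    (hNc : N.Countable) (h : C(X, Z)) (hh : Tendsto h (cocompact X) (𝓝 a)) :
    (range h).Countable := by
  choose p hp using fun y : ↥(range h \ {a}) => y.2.1
  choose A hA B hB mem_B lt_half half_le using
    fun y => hN.exists_isolating hh (p := p y) (hp y ▸ Ne.symm y.2.2)
  have injective : Function.Injective
      fun y => ((⟨A y, hA y⟩, ⟨B y, hB y⟩) : N × countableBasis Z) := by
    intro y z hyz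
    simp only [Prod.mk.injEq, Subtype.mk.injEq] at hyz
    by_contra hne
    obtain ⟨f, hf, hle⟩ := half_le y (p z) (hyz.2 ▸ mem_B z) (by
      rwa [hp, hp, ne_comm, Ne, ← Subtype.ext_iff])
    exact (lt_half z f (hyz.1 ▸ hf)).not_ge hle
  have := hNc.to_subtype
  have := (countable_countableBasis Z).to_subtype
  exact ((countable_coe_iff.1 injective.countable).insert a).mono (by simp)

end CountableRange

section PointwiseClosure

variable {ι X Y : Type*} [PseudoMetricSpace Y] {F : ι → X → Y} {f : X → Y}

theorem mem_closure_image_pi_iff {M : Set ι} :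
    f ∈ closure (F '' M) ↔
      ∀ D : Set X, D.Finite → ∀ ε > 0, ∃ i ∈ M, ∀ x ∈ D, dist (F i x) (f x) < ε := by
  have basis : (𝓝 f).HasBasis (fun Dε : Set X × ℝ => Dε.1.Finite ∧ 0 < Dε.2)
      fun Dε => Dε.1.pi fun x => Metric.ball (f x) Dε.2 := by
    rw [nhds_pi]
    refine hasBasis_pi_same_index (fun x => Metric.nhds_basis_ball) fun D ε hD hε => ?_
    have small : ∀ᶠ δ in 𝓝[>] (0 : ℝ), ∀ x ∈ D, δ < ε x :=
      (eventually_all_finite hD).2 fun x hx =>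
        (eventually_lt_nhds (hε x hx)).filter_mono inf_le_left
    obtain ⟨δ, hδε, hδ⟩ := (small.and self_mem_nhdsWithin).exists
    exact ⟨δ, hδ, fun x hx => Metric.ball_subset_ball (hδε x hx).le⟩
  simpa [mem_closure_iff_nhds_basis basis, Set.mem_pi] using forall_congr' fun D => forall_comm

theorem exists_seq_tendsto_const_of_countable_range {M : ℕ → Set ι} {c : Y}
    (hM : ∀ n, (fun _ => c) ∈ closure (F '' M n))
    (hF : (range fun x (i : ⋃ n, M n) => F i x).Countable) :
    ∃ g : ℕ → ι, (∀ n, g n ∈ M n) ∧ Tendsto (fun n => F (g n)) atTop (𝓝 fun _ => c) := by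
  let Φ (x : X) (i : ⋃ n, M n) : Y := F i x
  have : Countable (range Φ) := hF.to_subtype
  let rep : range Φ → X := rangeSplitting Φ
  have continuous_comp_rep : Continuous fun (g : X → Y) y => g (rep y) := by fun_prop
  obtain ⟨U, hU⟩ := (𝓝 fun y => (fun _ => c) (rep y)).exists_antitone_basis
  have exists_mem (n : ℕ) : ∃ i ∈ M n, (fun y => F i (rep y)) ∈ U n := by
    obtain ⟨_, hiU, _, ⟨i, hi, rfl⟩, rfl⟩ := mem_closure_iff_nhds.1
      (map_mem_closure continuous_comp_rep (hM n) (mapsTo_image _ _)) _ (hU.mem n)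
    exact ⟨i, hi, hiU⟩
  choose g hg hgU using exists_mem
  refine ⟨g, hg, tendsto_pi_nhds.2 fun x => ?_⟩
  have F_rep (n : ℕ) : F (g n) (rep ⟨Φ x, mem_range_self x⟩) = F (g n) x :=
    congrFun (apply_rangeSplitting Φ _) ⟨g n, mem_iUnion.2 ⟨n, hg n⟩⟩
  simpa only [F_rep] using tendsto_pi_nhds.1 (hU.tendsto hgU) ⟨Φ x, mem_range_self x⟩

variable {K : Type*} [TopologicalSpace K] [CompactSpace K] {F : ι → K → Y} {f : K → Y} {M : Set ι}

theorem exists_finite_subset_forall_fin (hF : ∀ i ∈ M, Continuous (F i)) (hf : Continuous f)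
    (hfM : f ∈ closure (F '' M)) (k : ℕ) {ε : ℝ} (hε : 0 < ε) :
    ∃ T ⊆ M, T.Finite ∧ ∀ x : Fin k → K, ∃ i ∈ T, ∀ j, dist (F i (x j)) (f (x j)) < ε := by
  let V (i : ι) : Set (Fin k → K) := ⋂ j, {x | dist (F i (x j)) (f (x j)) < ε}
  have isOpen_V : ∀ i ∈ M, IsOpen (V i) := fun i hi => by
    have := hF i hi
    exact isOpen_iInter_of_finite fun j => isOpen_lt (by fun_prop) continuous_const
  have univ_subset : univ ⊆ ⋃ i ∈ M, V i := fun x _ => by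
    obtain ⟨i, hi, hix⟩ := mem_closure_image_pi_iff.1 hfM _ (finite_range x) ε hε
    exact mem_biUnion hi (mem_iInter.2 fun j => hix _ (mem_range_self j))
  obtain ⟨T, hTM, hT, hcover⟩ := isCompact_univ.elim_finite_subcover_image isOpen_V univ_subset
  exact ⟨T, hTM, hT, fun x => by simpa [V] using hcover (mem_univ x)⟩

theorem exists_countable_subset_mem_closure (hF : ∀ i ∈ M, Continuous (F i)) (hf : Continuous f)
    (hfM : f ∈ closure (F '' M)) : ∃ T ⊆ M, T.Countable ∧ f ∈ closure (F '' T) := by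
  choose T hTM hT hTf using fun k j : ℕ =>
    exists_finite_subset_forall_fin hF hf hfM k (Nat.one_div_pos_of_nat (α := ℝ) (n := j))
  refine ⟨⋃ k, ⋃ j, T k j, iUnion₂_subset hTM,
    countable_iUnion fun k => countable_iUnion fun j => (hT k j).countable,
    mem_closure_image_pi_iff.2 fun D hD ε hε => ?_⟩
  obtain ⟨k, x, -, rfl⟩ := hD.fin_param
  obtain ⟨j, hj⟩ := exists_nat_one_div_lt hε
  obtain ⟨i, hi, hix⟩ := hTf k j x
  exact ⟨i, mem_iUnion₂.2 ⟨k, j, hi⟩, forall_mem_range.2 fun l => (hix l).trans hj⟩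

variable {X : Type*} [TopologicalSpace X] [T2Space X]

theorem zero_mem_closure_image_extendOnePoint {M : Set C₀(X, ℝ)} :
    0 ∈ closure ((fun f => ⇑(extendOnePoint f)) '' M) ↔ (0 : X → ℝ) ∈ closure ((⇑) '' M) := by
  have continuous_restrict : Continuous fun (g : OnePoint X → ℝ) (x : X) => g x := by fun_prop
  have continuous_extend : Continuous fun (g : X → ℝ) (z : OnePoint X) => z.elim 0 g :=
    continuous_pi fun z => by
      cases z
      exacts [continuous_const, continuous_apply _]
  have elim_eq (f : C₀(X, ℝ)) : (fun z : OnePoint X => z.elim 0 f) = extendOnePoint f := by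
    ext z
    cases z <;> rfl
  have elim_zero : (fun z : OnePoint X => z.elim 0 (0 : X → ℝ)) = 0 := by
    ext z
    cases z <;> rfl
  constructor <;> intro h
  · exact map_mem_closure (f := fun (g : OnePoint X → ℝ) (x : X) => g x) continuous_restrict h
      (forall_mem_image.2 fun f hf => ⟨f, hf, rfl⟩)
  · rw [← elim_zero]
    exact map_mem_closure continuous_extend h
      (forall_mem_image.2 fun f hf => ⟨f, hf, (elim_eq f).symm⟩)

theorem exists_countable_subset_zero_mem_closure {M : Set C₀(X, ℝ)}
    (hM : (0 : X → ℝ) ∈ closure ((⇑) '' M)) :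
    ∃ T ⊆ M, T.Countable ∧ (0 : X → ℝ) ∈ closure ((⇑) '' T) := by
  simp only [← zero_mem_closure_image_extendOnePoint] at hM ⊢
  exact exists_countable_subset_mem_closure (fun f _ => (extendOnePoint f).continuous)
    continuous_const hM

end PointwiseClosure

section Conclusion

theorem IsCsNetworkAt.exists_subset_eventually_mem {S ι : Type*} [TopologicalSpace S] {a : S}
    {N : Set (Set S)} (hN : IsCsNetworkAt N a) (hNc : N.Countable) {l : Filter ι} {F : ι → S}
    (hF : ∀ M : ℕ → Set ι, (∀ n, ∃ᶠ i in l, i ∈ M n) →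
      ∃ g : ℕ → ι, (∀ n, g n ∈ M n) ∧ Tendsto (fun n => F (g n)) atTop (𝓝 a))
    {U : Set S} (hU : U ∈ 𝓝 a) : ∃ A ∈ N, A ⊆ U ∧ ∀ᶠ i in l, F i ∈ A := by
  by_contra! hcon
  have nonempty : {A ∈ N | A ⊆ U}.Nonempty :=
    let ⟨A, hA, hAU, _⟩ := hN _ tendsto_const_nhds U hU
    ⟨A, hA, hAU⟩
  obtain ⟨e, he⟩ := (hNc.mono (sep_subset N (· ⊆ U))).exists_eq_range nonempty
  have e_mem (m : ℕ) : e m ∈ {A ∈ N | A ⊆ U} := he ▸ mem_range_self m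
  -- `n.unpair.1` takes every value infinitely often, so the sequence leaves each `e m` repeatedly.
  obtain ⟨g, hg, hga⟩ := hF (fun n => {i | F i ∉ e n.unpair.1}) fun n =>
    hcon _ (e_mem _).1 (e_mem _).2
  obtain ⟨A, hA, hAU, hgA⟩ := hN _ hga U hU
  obtain ⟨m, rfl⟩ : A ∈ range e := he ▸ ⟨hA, hAU⟩
  obtain ⟨k, hk⟩ := eventually_atTop.1 hgA
  have := hg (Nat.pair m k)
  simp only [Nat.unpair_pair, mem_ofPred_eq] at this
  exact this (hk _ (Nat.right_le_pair m k))

variable {X : Type*} [TopologicalSpace X] [T2Space X] [LocallyCompactSpace X]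

theorem finite_ofPred_forall_apply_lt_one {M : Set C₀(X, ℝ)}
    (hM : ∀ᶠ f : C₀(X, ℝ) in comap (⇑) (𝓝 0) ⊓ 𝓟 (Metric.closedBall 0 1), f ∈ M) :
    {p | ∀ f ∈ M, f p < 1}.Finite := by
  rw [eventually_inf_principal, eventually_comap, nhds_pi, eventually_iff, Filter.mem_pi] at hM
  obtain ⟨D, hD, V, hV, hDM⟩ := hM
  refine hD.subset fun p hp => by_contra fun hpD => ?_
  obtain ⟨f, hfp, hfD, hfc, hf⟩ := exists_continuous_one_zero_of_isCompact
    (isCompact_singleton (x := p)) hD.isClosed (disjoint_singleton_left.2 hpD)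
  let g : C₀(X, ℝ) := ⟨f, hfc.is_zero_at_infty⟩
  have norm_le : ‖g‖ ≤ 1 := (BoundedContinuousFunction.norm_le zero_le_one).2 fun x =>
    abs_le.2 ⟨neg_one_lt_zero.le.trans (hf x).1, (hf x).2⟩
  have g_mem : g ∈ M := hDM (a := g) (fun x hx => (hfD hx).symm ▸ mem_of_mem_nhds (hV x)) g rfl
    (mem_closedBall_zero_iff.2 norm_le)
  exact (hp g g_mem).ne (hfp rfl)

variable {N : Set (Set (WeakSpace ℝ C₀(X, ℝ)))}

theorem IsCsNetworkAt.exists_seq_tendsto_zero (hN : IsCsNetworkAt N 0) (hNc : N.Countable)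
    {M : ℕ → Set C₀(X, ℝ)} (hM : ∀ n,
      ∃ᶠ f : C₀(X, ℝ) in comap (⇑) (𝓝 0) ⊓ 𝓟 (Metric.closedBall 0 1), f ∈ M n) :
    ∃ g : ℕ → C₀(X, ℝ), (∀ n, g n ∈ M n) ∧
      Tendsto (fun n => toWeakSpace ℝ C₀(X, ℝ) (g n)) atTop (𝓝 0) := by
  have zero_mem (n : ℕ) : (0 : X → ℝ) ∈ closure ((⇑) '' (Metric.closedBall 0 1 ∩ M n)) := by
    rw [mem_closure_iff_frequently]
    refine (frequently_comap.1 (frequently_inf_principal.1 (hM n))).mono ?_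
    rintro _ ⟨f, rfl, hf⟩
    exact ⟨f, hf, rfl⟩
  choose T hTM hT hT0 using fun n => exists_countable_subset_zero_mem_closure (zero_mem n)
  have := (countable_iUnion hT).to_subtype
  let h : C(X, (⋃ n, T n) → ℝ) := ⟨fun x f => f.1 x, by fun_prop⟩
  have tendsto_h : Tendsto h (cocompact X) (𝓝 0) := tendsto_pi_nhds.2 fun f => zero_at_infty f.1
  obtain ⟨g, hgT, hg⟩ := exists_seq_tendsto_const_of_countable_range (c := (0 : ℝ)) hT0
    (hN.countable_range hNc h tendsto_h)
  refine ⟨g, fun n => (hTM n (hgT n)).2, ?_⟩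
  rw [← map_zero (toWeakSpace ℝ C₀(X, ℝ))]
  exact tendsto_toWeakSpace_of_tendsto_coe (C := 1)
    (.of_forall fun n => mem_closedBall_zero_iff.1 (hTM n (hgT n)).1) hg

theorem IsCsNetworkAt.countable (hN : IsCsNetworkAt N 0) (hNc : N.Countable) : Countable X := by
  have exists_mem (p : X) : ∃ A ∈ N, (∀ f ∈ A, (toWeakSpace ℝ C₀(X, ℝ)).symm f p < 1) ∧
      ∀ᶠ f in comap (⇑) (𝓝 0) ⊓ 𝓟 (Metric.closedBall 0 1), toWeakSpace ℝ C₀(X, ℝ) f ∈ A := by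
    refine hN.exists_subset_eventually_mem hNc (fun M => hN.exists_seq_tendsto_zero hNc) ?_
    exact ((continuous_apply p).comp continuous_coe_symm_toWeakSpace).tendsto 0
      |>.eventually_lt_const (by simp)
  choose A hAN hA hAev using exists_mem
  have := hNc.to_subtype
  let φ (p : X) : N := ⟨A p, hAN p⟩
  refine Countable.of_preimage_singleton (f := φ) fun B => ?_
  obtain hB | ⟨q, rfl⟩ := (φ ⁻¹' {B}).eq_empty_or_nonempty
  · exact hB ▸ countable_empty
  · have fiber_subset : φ ⁻¹' {φ q} ⊆ {p | ∀ f ∈ toWeakSpace ℝ C₀(X, ℝ) ⁻¹' A q, f p < 1} := by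
      intro p hpq f hf
      have A_eq : A p = A q := congrArg Subtype.val hpq
      simpa using hA p (toWeakSpace ℝ C₀(X, ℝ) f) (A_eq ▸ hf)
    exact (finite_ofPred_forall_apply_lt_one (hAev q)).countable.mono fiber_subset

end Conclusion

/-- For a locally compact Hausdorff space `X`, the Banach space `C₀(X)` of continuous
functions vanishing at infinity, with its weak topology, is an ℵ-space iff `X` is countable. -/
theorem czero_weakAleph_iff_countable
    (X : Type) [TopologicalSpace X] [T2Space X] [LocallyCompactSpace X] :
    IsAlephSpace (WeakSpace ℝ (ZeroAtInftyContinuousMap X ℝ)) ↔ Countable X := by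
  refine ⟨fun h => ?_, fun _ => isAleph0Space_weakSpace_of_countable.isAlephSpace⟩
  obtain ⟨N, hNc, hN⟩ := h.exists_countable_isCsNetworkAt 0
  exact hN.countable hNc
end

section
/- Let X be a countable regular Hausdorff space that is an ℵ₀-space (i.e., X has a countable k-network). Then C_c(X) endowed with its weak topology σ(E,E′) is an ℵ₀-space. In particular, C_c(X) is a weakly ℵ₀-space for every countable metrizable space X. -/
open TopologicalSpace Filter Set

/-!
The topology of pointwise convergence on `C(X, ℝ)` is coarser than the weak topology and, `X` being
countable, has a countable base. So it is enough to find a countable family of sets of functions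
such that, whenever `U` is a weak neighbourhood of a point `f` of a weakly compact set `Q`, some
member `S ⊇ Q` of the family has a pointwise neighbourhood of `f` within `S` contained in `U`.

If `K` is compact and countable, the evaluations span a norm-dense subspace of the dual of
`C(K, ℝ)`: every point `x` has a neighbourhood on which a functional `ψ` is, up to a small error, a
multiple of the evaluation at `x`, and errors which are summable over `K` can be patched together by
a partition of unity. Every functional on `C(X, ℝ)` factors through the restriction to a compact
set, so for each weak neighbourhood of `f` there is a compact `C` such that, on `{g | |g| ≤ M on A}`
with `A ⊇ C` and `M` arbitrary, it contains a pointwise neighbourhood of `f`.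

By the uniform boundedness principle, a weakly compact set `Q` is uniformly bounded on compact sets.
It is even bounded on some `A ⊇ C` in the countable algebra of sets generated by the k-network:
choose a decreasing sequence `A n ⊇ C` in the algebra which enters every neighbourhood of `C`; if
`Q` were bounded on no `A n`, it would be unbounded on `C ∪ {x n | n}` for some `x n ∈ A n`, which
is compact. Hence the sets `{g | |g| ≤ M on A}`, intersected with preimages of basic open sets of
`X → ℝ`, form a countable k-network.
-/

open scoped Topology

section Functionals

variable {𝕜 : Type*} [RCLike 𝕜]

lemma exists_strongDual_comp_eq {E V : Type*} [AddCommGroup E] [Module 𝕜 E] [AddCommGroup V]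
    [Module 𝕜 V] [TopologicalSpace V] [PolynormableSpace 𝕜 V] (T : E →ₗ[𝕜] V)
    (φ : Module.Dual 𝕜 E) {p : Seminorm 𝕜 V} (hp : Continuous p) (hφ : ∀ x, ‖φ x‖ ≤ p (T x)) :
    ∃ ψ : StrongDual 𝕜 V, ∀ x, ψ (T x) = φ x := by
  obtain ⟨s, hs⟩ := T.rangeRestrict.exists_rightInverse_of_surjective T.range_rangeRestrict
  have hTs (y : T.range) : T (s y) = y := congrArg Subtype.val (LinearMap.congr_fun hs y)
  obtain ⟨ψ, hψ, -⟩ :=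
    Module.Dual.exists_continuous_extension_of_le_seminorm T.range (φ ∘ₗ s) hp fun y => by
      simpa [hTs] using hφ (s y)
  refine ⟨ψ, fun x => ?_⟩
  have hker : φ (s (T.rangeRestrict x) - x) = 0 := by
    simpa [hTs] using hφ (s (T.rangeRestrict x) - x)
  rw [map_sub, sub_eq_zero] at hker
  exact (hψ (T.rangeRestrict x)).trans hker

lemma tendsto_apply_of_mem_closure_span {α V : Type*} [SeminormedAddCommGroup V]
    [NormedSpace 𝕜 V] {l : Filter α} {u : α → V} {v : V} {M : ℝ} {D : Set (StrongDual 𝕜 V)}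
    (hu : ∀ᶠ a in l, ‖u a‖ ≤ M) (hD : ∀ δ ∈ D, Tendsto (fun a => δ (u a)) l (𝓝 (δ v)))
    {ψ : StrongDual 𝕜 V} (hψ : ψ ∈ closure (Submodule.span 𝕜 D : Set (StrongDual 𝕜 V))) :
    Tendsto (fun a => ψ (u a)) l (𝓝 (ψ v)) := by
  have hspan : ∀ μ ∈ Submodule.span 𝕜 D, Tendsto (fun a => μ (u a)) l (𝓝 (μ v)) := by
    intro μ hμ
    induction hμ using Submodule.span_induction with
    | mem δ hδ => exact hD δ hδ
    | zero => exact tendsto_const_nhds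
    | add μ ν _ _ hμ hν => exact hμ.add hν
    | smul c μ _ hμ => exact hμ.const_smul c
  obtain ⟨μ, hμ, hlim⟩ := mem_closure_iff_seq_limit.1 hψ
  have hdist : Tendsto (fun n => ‖ψ - μ n‖ * M) atTop (𝓝 0) := by
    simpa using ((tendsto_const_nhds (x := ψ)).sub hlim).norm.mul_const M
  have hunif : TendstoUniformlyOnFilter (fun n a => μ n (u a)) (fun a => ψ (u a)) atTop l := by
    refine Metric.tendstoUniformlyOnFilter_iff.2 fun ε hε => ?_
    filter_upwards [(hdist.eventually_lt_const hε).prod_mk hu] with ⟨n, a⟩ ⟨hn, ha⟩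
    rw [dist_eq_norm, ← sub_apply]
    exact ((ψ - μ n).le_opNorm_of_le ha).trans_lt hn
  exact hunif.tendsto_of_eventually_tendsto (.of_forall fun n => hspan _ (hμ n))
    (((ContinuousLinearMap.apply 𝕜 𝕜 v).continuous.tendsto ψ).comp hlim)

lemma isBounded_preimage_toWeakSpace_of_isCompact {V : Type*} [NormedAddCommGroup V]
    [NormedSpace 𝕜 V] {Q : Set (WeakSpace 𝕜 V)} (hQ : IsCompact Q) :
    Bornology.IsBounded (toWeakSpace 𝕜 V ⁻¹' Q) := by
  have hJQ := WeakDual.isBounded_iff_isVonNBounded.2 <|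
    (hQ.image (NormedSpace.inclusionInDoubleDualWeak 𝕜 V).continuous).isVonNBounded 𝕜
  have hJ := (NormedSpace.inclusionInDoubleDualLi 𝕜 (E := V)).antilipschitz
  exact (hJ.isBounded_preimage hJQ).subset fun v hv => ⟨_, hv, rfl⟩

lemma exists_forall_abs_apply_le_and_lt {V : Type*} [NormedAddCommGroup V] [NormedSpace ℝ V]
    (ψ : StrongDual ℝ V) (I : Submodule ℝ V) :
    ∃ S : ℝ, 0 ≤ S ∧ (∀ f ∈ I, |ψ f| ≤ S * ‖f‖) ∧ ∀ r < S, ∃ h ∈ I, ‖h‖ < 1 ∧ r < ψ h := by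
  refine ⟨‖ψ ∘L I.subtypeL‖, ContinuousLinearMap.opNorm_nonneg _,
    fun f hf => (ψ ∘L I.subtypeL).le_opNorm ⟨f, hf⟩, fun r hr => ?_⟩
  obtain ⟨h, hh, hr⟩ := (ψ ∘L I.subtypeL).exists_lt_apply_of_lt_opNorm hr
  rcases lt_abs.1 hr with hr | hr
  · exact ⟨h, h.2, hh, hr⟩
  · exact ⟨-h, I.neg_mem h.2, by simpa using hh, by simpa using hr⟩

end Functionals


section CompactSpace

variable {K : Type*} [TopologicalSpace K] [CompactSpace K]

lemma exists_pos_forall_abs_apply_le (ψ : StrongDual ℝ C(K, ℝ)) (x : K) {ε : ℝ} (hε : 0 < ε) :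
    ∃ u : C(K, ℝ), 0 ≤ u ∧ 0 < u x ∧
      ∀ k : C(K, ℝ), k x = 0 → (∀ y, u y = 0 → k y = 0) → |ψ k| ≤ ε * ‖k‖ := by
  obtain ⟨S, hS0, hS, hsup⟩ :=
    exists_forall_abs_apply_le_and_lt ψ (ContinuousMap.evalCLM ℝ x).ker
  obtain ⟨h, hhx, hh, hψh⟩ := hsup (S - ε / 2) (by linarith)
  replace hhx : h x = 0 := hhx
  obtain ⟨d, hd, hSd⟩ : ∃ d > 0, S * d ≤ ε / 2 :=
    ⟨ε / (2 * (S + 1)), by positivity, by field_simp; linarith⟩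
  refine ⟨(.const K d - |h|) ⊔ 0, le_sup_right, by simpa [hhx] using hd, fun k hkx hk => ?_⟩
  replace hk (y : K) (hy : d ≤ |h y|) : k y = 0 := hk y (by simpa using hy)
  -- `h` nearly attains the norm `S` of `ψ` on functions vanishing at `x`, and adding to `‖k‖ • h` a
  -- function `k` supported where `|h| < d` barely increases the norm, so `ψ k` has to be small.
  have hle (k : C(K, ℝ)) (hkx : k x = 0) (hk : ∀ y, d ≤ |h y| → k y = 0) :
      ψ k ≤ ε * ‖k‖ := by
    have hnorm : ‖‖k‖ • h + k‖ ≤ ‖k‖ * (1 + d) := by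
      refine (ContinuousMap.norm_le _ (by positivity)).2 fun y => ?_
      have hy : ‖(‖k‖ • h + k) y‖ ≤ ‖k‖ * |h y| + |k y| := by
        simpa [abs_mul] using abs_add_le (‖k‖ * h y) (k y)
      refine hy.trans ?_
      rcases le_or_gt d |h y| with hdy | hdy
      · have hhy : |h y| ≤ 1 := (h.norm_coe_le_norm y).trans hh.le
        rw [hk y hdy, abs_zero, add_zero]
        gcongr
        linarith
      · have hky : |k y| ≤ ‖k‖ := k.norm_coe_le_norm y
        nlinarith [norm_nonneg k]
    have hψ : ‖k‖ * ψ h + ψ k ≤ S * (‖k‖ * (1 + d)) := calc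
      ‖k‖ * ψ h + ψ k = ψ (‖k‖ • h + k) := by simp
      _ ≤ S * ‖‖k‖ • h + k‖ := (le_abs_self _).trans (hS _ (by simp [hhx, hkx]))
      _ ≤ S * (‖k‖ * (1 + d)) := by gcongr
    nlinarith [norm_nonneg k]
  refine abs_le'.2 ⟨hle k hkx hk, ?_⟩
  simpa using hle (-k) (by simpa using hkx) (by simpa using hk)

lemma exists_sum_eq_one_subordinate {u : K → C(K, ℝ)} (hu : ∀ x, 0 ≤ u x)
    (hux : ∀ x, 0 < u x x) : ∃ (t : Finset K) (p : K → C(K, ℝ)), (∀ x, 0 ≤ p x) ∧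
      ∑ x ∈ t, p x = 1 ∧ ∀ x y, u x y = 0 → p x y = 0 := by
  obtain ⟨t, ht⟩ := CompactSpace.elim_nhds_subcover (fun x => {y | 0 < u x y}) fun x =>
    (isOpen_lt continuous_const (u x).continuous).mem_nhds (hux x)
  have hpos (y : K) : 0 < ∑ x ∈ t, u x y := by
    obtain ⟨x, hx, hy⟩ := mem_iUnion₂.1 (ht ▸ mem_univ y : y ∈ ⋃ x ∈ t, {y | 0 < u x y})
    exact Finset.sum_pos' (fun x _ => hu x y) ⟨x, hx, hy⟩
  refine ⟨t, fun x => ⟨fun y => u x y / ∑ x ∈ t, u x y, ?_⟩, fun x y => ?_, ?_, ?_⟩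
  · exact (u x).continuous.div (by fun_prop) fun y => (hpos y).ne'
  · exact div_nonneg (hu x y) (hpos y).le
  · ext y
    simp [← Finset.sum_div, (hpos y).ne']
  · intro x y hxy
    simp [hxy]

lemma norm_sub_sum_smul_evalCLM_le {ψ : StrongDual ℝ C(K, ℝ)} {t : Finset K} {p : K → C(K, ℝ)}
    {e : K → ℝ} (hp : ∑ x ∈ t, p x = 1) (he : ∀ x, 0 ≤ e x)
    (hψ : ∀ x ∈ t, ∀ k : C(K, ℝ), k x = 0 → |ψ (p x * k)| ≤ e x * ‖k‖) :
    ‖ψ - ∑ x ∈ t, ψ (p x) • ContinuousMap.evalCLM ℝ x‖ ≤ (∑ x ∈ t, e x) * 2 := by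
  refine ContinuousLinearMap.opNorm_le_bound _
    (mul_nonneg (Finset.sum_nonneg fun x _ => he x) zero_le_two) fun g => ?_
  have hosc (x : K) : ‖g - .const K (g x)‖ ≤ 2 * ‖g‖ := by
    refine (ContinuousMap.norm_le _ (by positivity)).2 fun y => ?_
    refine (norm_sub_le (g y) (g x)).trans ?_
    linarith [g.norm_coe_le_norm x, g.norm_coe_le_norm y]
  have hdecomp : ψ g - ∑ x ∈ t, g x * ψ (p x) = ∑ x ∈ t, ψ (p x * (g - .const K (g x))) := by
    have hg : ∑ x ∈ t, ψ (p x * g) = ψ g := by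
      rw [← map_sum, ← Finset.sum_mul, hp, one_mul]
    have hsmul (x : K) : p x * .const K (g x) = g x • p x := by
      ext y
      simp [mul_comm]
    simp only [mul_sub, hsmul, map_sub, map_smul, smul_eq_mul, Finset.sum_sub_distrib, hg]
  calc ‖(ψ - ∑ x ∈ t, ψ (p x) • ContinuousMap.evalCLM ℝ x : StrongDual ℝ C(K, ℝ)) g‖
      = |∑ x ∈ t, ψ (p x * (g - .const K (g x)))| := by
        rw [← hdecomp]
        simp [mul_comm]
    _ ≤ ∑ x ∈ t, |ψ (p x * (g - .const K (g x)))| :=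
        Finset.abs_sum_le_sum_abs _ _
    _ ≤ ∑ x ∈ t, e x * (2 * ‖g‖) := Finset.sum_le_sum fun x hx =>
        (hψ x hx _ (by simp)).trans (mul_le_mul_of_nonneg_left (hosc x) (he x))
    _ = (∑ x ∈ t, e x) * 2 * ‖g‖ := by rw [← Finset.sum_mul, mul_assoc]

theorem dense_span_range_evalCLM [Countable K] :
    Dense (Submodule.span ℝ (range (ContinuousMap.evalCLM ℝ : K → StrongDual ℝ C(K, ℝ))) :
      Set (StrongDual ℝ C(K, ℝ))) := by
  intro ψ
  refine (SeminormedAddCommGroup.mem_closure_iff (E := StrongDual ℝ C(K, ℝ))).2 fun ε hε => ?_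
  obtain ⟨e, he, hsum⟩ :=
    (countable_univ (α := K)).exists_pos_forall_sum_le (by linarith : 0 < ε / 4)
  choose u hu hux hψ using fun x : K => exists_pos_forall_abs_apply_le ψ x (he x)
  obtain ⟨t, p, hp, hpt, hpu⟩ := exists_sum_eq_one_subordinate hu hux
  have hp1 (x : K) (hx : x ∈ t) : ‖p x‖ ≤ 1 := by
    refine (ContinuousMap.norm_le _ zero_le_one).2 fun y =>
      (Real.norm_of_nonneg (hp x y)).trans_le ?_
    exact (hpt ▸ Finset.single_le_sum (fun x _ => hp x) hx : p x ≤ 1) y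
  refine ⟨∑ x ∈ t, ψ (p x) • ContinuousMap.evalCLM ℝ x, Submodule.sum_mem _ fun x _ =>
    Submodule.smul_mem _ _ (Submodule.subset_span (mem_range_self x)), ?_⟩
  have hbound : ‖ψ - ∑ x ∈ t, ψ (p x) • ContinuousMap.evalCLM ℝ x‖ ≤ (∑ x ∈ t, e x) * 2 :=
    norm_sub_sum_smul_evalCLM_le hpt (fun x => (he x).le) fun x hx k hkx => calc
      |ψ (p x * k)| ≤ e x * ‖p x * k‖ :=
        hψ x _ (by simp [hkx]) fun y hy => by simp [hpu x y hy]
      _ ≤ e x * (‖p x‖ * ‖k‖) := mul_le_mul_of_nonneg_left (norm_mul_le _ _) (he x).le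
      _ ≤ e x * ‖k‖ := mul_le_mul_of_nonneg_left
        (mul_le_of_le_one_left (norm_nonneg k) (hp1 x hx)) (he x).le
  linarith [hsum t (subset_univ _)]

end CompactSpace

section CompactOpen

variable {X : Type*} [TopologicalSpace X]

lemma exists_compacts_abs_apply_le (φ : StrongDual ℝ C(X, ℝ)) :
    ∃ (C : Compacts X) (r : ℝ), 0 < r ∧ ∀ f : C(X, ℝ), r * |φ f| ≤ ‖f.restrict C‖ := by
  have hball : φ ⁻¹' Metric.ball 0 1 ∈ 𝓝 (0 : C(X, ℝ)) :=
    φ.continuous.continuousAt.preimage_mem_nhds (by simpa using Metric.ball_mem_nhds 0 one_pos)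
  obtain ⟨⟨C, r⟩, ⟨hC, hr⟩, hsub⟩ :=
    (nhds_basis_uniformity'
      Metric.uniformity_basis_dist.compactConvergenceUniformity).mem_iff.1 hball
  let C' : Compacts X := ⟨C, hC⟩
  have hlt (f : C(X, ℝ)) (hf : ‖f.restrict C'‖ < r) : |φ f| < 1 := by
    have hfC : f ∈ φ ⁻¹' Metric.ball 0 1 := hsub fun x hx => by
      have hfx : |f x| < r := ((f.restrict C').norm_coe_le_norm ⟨x, hx⟩).trans_lt hf
      simpa using hfx
    simpa using hfC
  refine ⟨C', r, hr, fun f => le_of_forall_gt fun s hs => ?_⟩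
  have hs0 : 0 < s := (norm_nonneg _).trans_lt hs
  have hrs : 0 < r / s := div_pos hr hs0
  have hscale : |φ ((r / s) • f)| < 1 := hlt _ <| calc
    ‖(r / s) • f.restrict C'‖ = r / s * ‖f.restrict C'‖ := by
      rw [norm_smul, Real.norm_of_nonneg hrs.le]
    _ < r / s * s := by gcongr
    _ = r := div_mul_cancel₀ r hs0.ne'
  rw [map_smul, smul_eq_mul, abs_mul, abs_of_pos hrs, div_mul_eq_mul_div] at hscale
  exact (div_lt_one hs0).1 hscale

lemma exists_compacts_strongDual_restrict_eq (φ : StrongDual ℝ C(X, ℝ)) :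
    ∃ (C : Compacts X) (ψ : StrongDual ℝ C(C, ℝ)), ∀ f : C(X, ℝ), ψ (f.restrict C) = φ f := by
  obtain ⟨C, r, hr, hφ⟩ := exists_compacts_abs_apply_le φ
  let T : C(X, ℝ) →L[ℝ] C(C, ℝ) := ContinuousMap.compCLM ℝ ℝ (.restrict C (.id X))
  lift r to NNReal using hr.le
  have hp : Continuous (r⁻¹ • normSeminorm ℝ C(C, ℝ)) := continuous_norm.const_smul r⁻¹
  obtain ⟨ψ, hψ⟩ := exists_strongDual_comp_eq T.toLinearMap φ.toLinearMap hp fun f =>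
    (le_inv_mul_iff₀ hr).2 (hφ f)
  exact ⟨C, ψ, hψ⟩

/-- The function underlying an element of `C(X, ℝ)` with its weak topology. -/
noncomputable def weakEval (f : WeakSpace ℝ C(X, ℝ)) : X → ℝ := (toWeakSpace ℝ C(X, ℝ)).symm f

/-- The set of all continuous functions bounded by `M` in absolute value on `A`, as a subset of
`C(X, ℝ)` with its weak topology. -/
def boundedOn (A : Set X) (M : ℝ) : Set (WeakSpace ℝ C(X, ℝ)) := {f | ∀ x ∈ A, |weakEval f x| ≤ M}

lemma boundedOn_anti {A B : Set X} (h : A ⊆ B) (M : ℝ) : boundedOn B M ⊆ boundedOn A M :=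
  fun _ hf x hx => hf x (h hx)

lemma continuous_weakEval : Continuous (weakEval : WeakSpace ℝ C(X, ℝ) → X → ℝ) :=
  continuous_pi fun x => WeakBilin.eval_continuous _ (ContinuousMap.evalCLM ℝ x)

lemma exists_compacts_tendsto_apply_boundedOn [Countable X] (φ : StrongDual ℝ C(X, ℝ)) :
    ∃ C : Compacts X, ∀ M f, Tendsto (fun g => φ ((toWeakSpace ℝ C(X, ℝ)).symm g))
      (comap weakEval (𝓝 (weakEval f)) ⊓ 𝓟 (boundedOn C M))
      (𝓝 (φ ((toWeakSpace ℝ C(X, ℝ)).symm f))) := by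
  obtain ⟨C, ψ, hψ⟩ := exists_compacts_strongDual_restrict_eq φ
  refine ⟨C, fun M f => ?_⟩
  simp_rw [← hψ]
  have hbdd : ∀ g ∈ boundedOn (C : Set X) M,
      ‖((toWeakSpace ℝ C(X, ℝ)).symm g).restrict C‖ ≤ |M| := fun g hg =>
    (ContinuousMap.norm_le _ (abs_nonneg M)).2 fun x => (hg x x.2).trans (le_abs_self M)
  refine tendsto_apply_of_mem_closure_span
    (mem_inf_of_right (mem_principal.2 hbdd)) ?_ (dense_span_range_evalCLM ψ)
  rintro _ ⟨x, rfl⟩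
  exact ((tendsto_pi_nhds.1 tendsto_comap) x.1).mono_left inf_le_left

lemma exists_compacts_forall_mem_comap_inf_boundedOn [Countable X] {f : WeakSpace ℝ C(X, ℝ)}
    {U : Set (WeakSpace ℝ C(X, ℝ))} (hU : U ∈ 𝓝 f) :
    ∃ C : Compacts X, ∀ M, U ∈ comap weakEval (𝓝 (weakEval f)) ⊓ 𝓟 (boundedOn C M) := by
  have hind : Topology.IsInducing fun (g : WeakSpace ℝ C(X, ℝ)) (φ : StrongDual ℝ C(X, ℝ)) =>
      φ ((toWeakSpace ℝ C(X, ℝ)).symm g) := ⟨rfl⟩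
  rw [hind.nhds_eq_comap, nhds_pi] at hU
  obtain ⟨s, hs, hsU⟩ := hU
  obtain ⟨I, hI, t, ht, hts⟩ := Filter.mem_pi.1 hs
  choose C hC using exists_compacts_tendsto_apply_boundedOn (X := X)
  refine ⟨hI.toFinset.sup C, fun M => mem_of_superset ?_ ((preimage_mono hts).trans hsU)⟩
  rw [pi_def, preimage_iInter₂, biInter_mem hI]
  intro φ hφ
  have hle : C φ ≤ hI.toFinset.sup C := Finset.le_sup (hI.mem_toFinset.2 hφ)
  have hmono := principal_mono.2 (boundedOn_anti (SetLike.coe_subset_coe.2 hle) M)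
  exact (hC φ M f).mono_left (inf_le_inf_left _ hmono) (ht φ)

lemma exists_subset_boundedOn {Q : Set (WeakSpace ℝ C(X, ℝ))} (hQ : IsCompact Q) {C : Set X}
    (hC : IsCompact C) : ∃ M, Q ⊆ boundedOn C M := by
  have := isCompact_iff_compactSpace.1 hC
  let T : C(X, ℝ) →L[ℝ] C(C, ℝ) := ContinuousMap.compCLM ℝ ℝ (.restrict C (.id X))
  obtain ⟨M, hM⟩ := (isBounded_preimage_toWeakSpace_of_isCompact
    (hQ.image (WeakSpace.map T).continuous)).exists_norm_le
  exact ⟨M, fun f hf x hx => ((T ((toWeakSpace ℝ C(X, ℝ)).symm f)).norm_coe_le_norm ⟨x, hx⟩).trans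
    (hM _ ⟨f, hf, rfl⟩)⟩

end CompactOpen

section KNetwork

variable {X : Type*} [TopologicalSpace X]

lemma isCompact_union_range_of_tendsto {ι : Type*} {C : Set X} (hC : IsCompact C) {x : ι → X}
    (hx : Tendsto x cofinite (𝓝ˢ C)) : IsCompact (C ∪ range x) := by
  refine isCompact_of_finite_subcover fun U hU hcov => ?_
  obtain ⟨t, ht⟩ := hC.elim_finite_subcover U hU (subset_union_left.trans hcov)
  have hfin : {i | x i ∉ ⋃ j ∈ t, U j}.Finite :=
    hx ((isOpen_biUnion fun j _ => hU j).mem_nhdsSet.2 ht)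
  obtain ⟨t', ht'⟩ := (hfin.image x).isCompact.elim_finite_subcover U hU <|
    (image_subset_range _ _).trans (subset_union_right.trans hcov)
  classical
  refine ⟨t ∪ t', ?_⟩
  rw [Finset.set_biUnion_union, union_subset_iff]
  refine ⟨ht.trans subset_union_left, range_subset_iff.2 fun i => ?_⟩
  exact or_iff_not_imp_left.2 fun hi => ht' (mem_image_of_mem x hi)

lemma IsKNetwork.exists_tendsto_smallSets_nhdsSet {N : Set (Set X)} (hN : N.Countable)
    (hk : IsKNetwork N) {C : Set X} (hC : IsCompact C) :
    ∃ A : ℕ → Set X, (∀ n, A n ∈ MeasureTheory.generateSetAlgebra N) ∧ (∀ n, C ⊆ A n) ∧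
      Tendsto A atTop (𝓝ˢ C).smallSets := by
  have halg := MeasureTheory.isSetAlgebra_generateSetAlgebra (𝒜 := N)
  have hcount : {S ∈ MeasureTheory.generateSetAlgebra N | C ⊆ S}.Countable :=
    (MeasureTheory.countable_generateSetAlgebra hN).mono (sep_subset _ _)
  obtain ⟨B, hB⟩ := hcount.exists_eq_range ⟨univ, halg.univ_mem, subset_univ C⟩
  have hBmem (n : ℕ) : B n ∈ MeasureTheory.generateSetAlgebra N ∧ C ⊆ B n :=
    hB.symm.subset (mem_range_self n)
  refine ⟨fun n => ⋂ m ∈ Finset.Iic n, B m, fun n => halg.biInter_mem _ fun m _ => (hBmem m).1,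
    fun n => subset_iInter₂ fun m _ => (hBmem m).2, ?_⟩
  refine tendsto_smallSets_iff.2 fun V hV => ?_
  obtain ⟨U, hU, hCU, hUV⟩ := mem_nhdsSet_iff_exists.1 hV
  obtain ⟨F, hFN, hF, hCF, hFU⟩ := hk C U hC hU hCU
  have hFmem : ⋃₀ F ∈ MeasureTheory.generateSetAlgebra N := by
    rw [sUnion_eq_biUnion, ← hF.coe_toFinset]
    exact halg.biUnion_mem hF.toFinset fun S hS =>
      MeasureTheory.self_subset_generateSetAlgebra (hFN (hF.mem_toFinset.1 hS))
  obtain ⟨m, hm⟩ : ⋃₀ F ∈ range B := hB.subset ⟨hFmem, hCF⟩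
  filter_upwards [eventually_ge_atTop m] with n hn
  exact (biInter_subset_of_mem (Finset.mem_Iic.2 hn)).trans (hm.trans_subset (hFU.trans hUV))

lemma IsKNetwork.exists_mem_generateSetAlgebra_subset_boundedOn {N : Set (Set X)}
    (hN : N.Countable) (hk : IsKNetwork N) {Q : Set (WeakSpace ℝ C(X, ℝ))} (hQ : IsCompact Q)
    {C : Set X} (hC : IsCompact C) :
    ∃ A ∈ MeasureTheory.generateSetAlgebra N, C ⊆ A ∧ ∃ M : ℕ, Q ⊆ boundedOn A M := by
  obtain ⟨A, hA, hCA, hlim⟩ := hk.exists_tendsto_smallSets_nhdsSet hN hC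
  by_contra! hunbdd
  simp only [boundedOn, not_subset, mem_ofPred_eq, not_forall, not_le] at hunbdd
  choose f hf x hx hfx using fun n => hunbdd (A n) (hA n) (hCA n) n
  have hxC : Tendsto x cofinite (𝓝ˢ C) :=
    Nat.cofinite_eq_atTop ▸ hlim.of_smallSets (.of_forall hx)
  obtain ⟨M, hM⟩ := exists_subset_boundedOn hQ (isCompact_union_range_of_tendsto hC hxC)
  obtain ⟨n, hn⟩ := exists_nat_gt M
  exact (hM (hf n) (x n) (.inr (mem_range_self n))).not_gt (hn.trans (hfx n))

lemma exists_countable_isKNetwork_of_continuous {Y Z : Type*} [TopologicalSpace Y]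
    [TopologicalSpace Z] [SecondCountableTopology Z] {p : Y → Z} (hp : Continuous p)
    {𝒮 : Set (Set Y)} (h𝒮 : 𝒮.Countable)
    (h : ∀ Q, IsCompact Q → ∀ y ∈ Q, ∀ U ∈ 𝓝 y,
      ∃ S ∈ 𝒮, Q ⊆ S ∧ U ∈ comap p (𝓝 (p y)) ⊓ 𝓟 S) :
    ∃ N : Set (Set Y), N.Countable ∧ IsKNetwork N := by
  refine ⟨image2 (fun S B => S ∩ p ⁻¹' B) 𝒮 (countableBasis Z),
    h𝒮.image2 (countable_countableBasis Z) _, fun Q U hQ hU hQU => ?_⟩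
  have hlocal : ∀ y ∈ Q, ∃ S ∈ 𝒮, ∃ B ∈ countableBasis Z, Q ⊆ S ∧ p y ∈ B ∧ S ∩ p ⁻¹' B ⊆ U := by
    intro y hy
    obtain ⟨S, hS, hQS, hUS⟩ := h Q hQ y hy U (hU.mem_nhds (hQU hy))
    obtain ⟨B, ⟨hB, hyB⟩, hBU⟩ := ((isBasis_countableBasis Z).nhds_hasBasis.comap p
      |>.inf_principal S).mem_iff.1 hUS
    exact ⟨S, hS, B, hB, hQS, hyB, inter_comm S _ ▸ hBU⟩
  choose! S hS B hB hQS hyB hSB using hlocal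
  obtain ⟨t, htQ, ht⟩ := hQ.elim_nhds_subcover (fun y => p ⁻¹' B y) fun y hy =>
    hp.continuousAt.preimage_mem_nhds
      (((isBasis_countableBasis Z).isOpen (hB y hy)).mem_nhds (hyB y hy))
  refine ⟨(fun y => S y ∩ p ⁻¹' B y) '' t, image_subset_iff.2 fun y hy =>
    mem_image2_of_mem (hS y (htQ y hy)) (hB y (htQ y hy)), t.finite_toSet.image _, ?_, ?_⟩
  · intro y hy
    obtain ⟨z, hz, hyz⟩ := mem_iUnion₂.1 (ht hy)
    exact ⟨_, mem_image_of_mem _ hz, hQS z (htQ z hz) hy, hyz⟩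
  · exact sUnion_subset (forall_mem_image.2 fun y hy => hSB y (htQ y hy))

end KNetwork

theorem cc_weakAleph0_of_countable_aleph0_space_general (X : Type*) [TopologicalSpace X]
    [Countable X] (hX : ∃ N : Set (Set X), N.Countable ∧ IsKNetwork N) :
    IsAleph0Space (WeakSpace ℝ C(X, ℝ)) := by
  obtain ⟨N, hN, hk⟩ := hX
  refine ⟨inferInstance, inferInstance, exists_countable_isKNetwork_of_continuous
    (𝒮 := image2 (fun A (M : ℕ) => boundedOn A M) (MeasureTheory.generateSetAlgebra N) univ)
    continuous_weakEval
    ((MeasureTheory.countable_generateSetAlgebra hN).image2 countable_univ _) ?_⟩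
  intro Q hQ f _ U hU
  obtain ⟨C, hC⟩ := exists_compacts_forall_mem_comap_inf_boundedOn hU
  obtain ⟨A, hA, hCA, M, hQM⟩ :=
    hk.exists_mem_generateSetAlgebra_subset_boundedOn hN hQ C.isCompact
  exact ⟨boundedOn A M, mem_image2_of_mem hA (mem_univ M), hQM,
    inf_le_inf_left _ (principal_mono.2 (boundedOn_anti hCA M)) (hC M)⟩

/-- If `X` is a countable regular Hausdorff ℵ₀-space, then `C_c(X)` endowed with its weak
topology is an ℵ₀-space. -/
theorem cc_weakAleph0_of_countable_aleph0_space
    (X : Type) [TopologicalSpace X] [T2Space X] [RegularSpace X] [Countable X]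
    (hX : ∃ N : Set (Set X), N.Countable ∧ IsKNetwork N) :
    IsAleph0Space (WeakSpace ℝ C(X, ℝ)) :=
  cc_weakAleph0_of_countable_aleph0_space_general X hX
end
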